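/- Fix an integer t ≥ 2. For every ε > 0 there exists N such that for every n ≥ N and every simple graph G on n vertices, θ_t(G) ≤ (1 + ε)·θ_t(T_{n,t}), where θ_t denotes the minimum number of cliques of G needed to cover all t-cliques of G and T_{n,t} is the Turán graph. -/

import Mathlib

open scoped Classical
open Finset

/-- `K` is a clique of `G`: a nonempty set of pairwise adjacent vertices. -/
def IsCliqueOf {V : Type} [Fintype V] [DecidableEq V] (G : SimpleGraph V) (K : Finset V) : Prop :=
  K.Nonempty ∧ G.IsClique (K : Set V)

/-- Total `c`-cost of a weighting `f` of the finsets of vertices. -/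
noncomputable def cliqueCost {V : Type} [Fintype V] [DecidableEq V]
    (c : ℕ → ℝ) (f : Finset V → ℝ) : ℝ :=
  ∑ K : Finset V, c K.card * f K

/-- `f` is a fractional `t`-clique cover of `G`. -/
def IsFracCover {V : Type} [Fintype V] [DecidableEq V]
    (t : ℕ) (G : SimpleGraph V) (f : Finset V → ℝ) : Prop :=
  (∀ K, 0 ≤ f K) ∧ (∀ K, ¬ IsCliqueOf G K → f K = 0) ∧
  ∀ T : Finset V, T.card = t → G.IsClique (T : Set V) →
    1 ≤ ∑ K ∈ Finset.univ.filter (fun K => T ⊆ K), f K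

/-- `f` is a fractional `t`-clique decomposition of `G`. -/
def IsFracDecomp {V : Type} [Fintype V] [DecidableEq V]
    (t : ℕ) (G : SimpleGraph V) (f : Finset V → ℝ) : Prop :=
  (∀ K, 0 ≤ f K) ∧ (∀ K, ¬ IsCliqueOf G K → f K = 0) ∧
  ∀ T : Finset V, T.card = t → G.IsClique (T : Set V) →
    ∑ K ∈ Finset.univ.filter (fun K => T ⊆ K), f K = 1

/-- `f` is an integer (`{0,1}`-valued) `t`-clique cover of `G`. -/
def IsIntCover {V : Type} [Fintype V] [DecidableEq V]
    (t : ℕ) (G : SimpleGraph V) (f : Finset V → ℝ) : Prop :=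
  IsFracCover t G f ∧ ∀ K, f K = 0 ∨ f K = 1

/-- `f` is an integer (`{0,1}`-valued) `t`-clique decomposition of `G`. -/
def IsIntDecomp {V : Type} [Fintype V] [DecidableEq V]
    (t : ℕ) (G : SimpleGraph V) (f : Finset V → ℝ) : Prop :=
  IsFracDecomp t G f ∧ ∀ K, f K = 0 ∨ f K = 1

/-- θ*_t(G,c): minimum total c-cost of a fractional t-clique cover. -/
noncomputable def thetaFrac {V : Type} [Fintype V] [DecidableEq V]
    (t : ℕ) (G : SimpleGraph V) (c : ℕ → ℝ) : ℝ :=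
  sInf { x | ∃ f, IsFracCover t G f ∧ x = cliqueCost c f }

/-- θ_t(G,c): minimum total c-cost of an integer t-clique cover. -/
noncomputable def thetaInt {V : Type} [Fintype V] [DecidableEq V]
    (t : ℕ) (G : SimpleGraph V) (c : ℕ → ℝ) : ℝ :=
  sInf { x | ∃ f, IsIntCover t G f ∧ x = cliqueCost c f }

/-- π*_t(G,c): minimum total c-cost of a fractional t-clique decomposition. -/
noncomputable def piFrac {V : Type} [Fintype V] [DecidableEq V]
    (t : ℕ) (G : SimpleGraph V) (c : ℕ → ℝ) : ℝ :=
  sInf { x | ∃ f, IsFracDecomp t G f ∧ x = cliqueCost c f }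

/-- π_t(G,c): minimum total c-cost of an integer t-clique decomposition. -/
noncomputable def piInt {V : Type} [Fintype V] [DecidableEq V]
    (t : ℕ) (G : SimpleGraph V) (c : ℕ → ℝ) : ℝ :=
  sInf { x | ∃ f, IsIntDecomp t G f ∧ x = cliqueCost c f }

/-- `G` is complete multipartite: vertices can be assigned to parts so that
adjacency holds exactly between distinct parts. -/
def IsCompleteMultipartite {V : Type} [Fintype V] [DecidableEq V]
    (G : SimpleGraph V) : Prop :=
  ∃ p : V → ℕ, ∀ u v, G.Adj u v ↔ p u ≠ p v

/-! Run a random greedy process for a bounded number of rounds on the vertices of `G` together with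
`δn` idle ones: pick a vertex at random, keep it, and continue inside its neighbourhood; picking an
idle vertex wastes the round. A `t`-clique is contained in the resulting clique with probability at
least nearly `(t/n)^t`, while a fixed `(t+1)`-set is with probability only `O(n^-(t+1))`. Scaling
the law of this clique by about `(n/t)^t` gives a fractional cover of total weight at most nearly
`(n/t)^t` in which all `(t+1)`-sets have small degree, so a Rödl nibble in the hypergraph of
`t`-cliques rounds it to an integral cover at small cost. The nibble picks one hyperedge at a time
and stays quasi-random because the squared deviation of the vertex degrees grows slowly on average.
Conversely, a clique of `T_{n,t}` contains at most one `t`-clique, and there are at least `⌊n/t⌋^t`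
of those. -/

section SetDegree

variable {X : Type*} [Fintype X] {w : Finset X → ℝ}

/-- The total weight of a weighted hypergraph, encoded as a function on all finsets of vertices;
the hyperedges are the finsets of nonzero weight. -/
noncomputable def totalWeight (w : Finset X → ℝ) : ℝ := ∑ K, w K

theorem totalWeight_nonneg (hw : ∀ K, 0 ≤ w K) : 0 ≤ totalWeight w :=
  sum_nonneg fun K _ => hw K

variable [DecidableEq X]

/-- The degree of a set `S` of vertices in the weighted hypergraph `w`: the weight of the
hyperedges containing `S`. The degree of a vertex `x` is `setDegree w {x}`. -/
noncomputable def setDegree (w : Finset X → ℝ) (S : Finset X) : ℝ := ∑ K with S ⊆ K, w K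

/-- The codegree of two vertices, with value `0` on the diagonal so that sums over all pairs of
vertices need no side condition. -/
noncomputable def codegree (w : Finset X → ℝ) (x y : X) : ℝ :=
  if x = y then 0 else setDegree w {x, y}

theorem setDegree_empty : setDegree w ∅ = totalWeight w := by
  simp [setDegree, totalWeight]

theorem setDegree_nonneg (hw : ∀ K, 0 ≤ w K) (S : Finset X) : 0 ≤ setDegree w S :=
  sum_nonneg fun K _ => hw K

theorem setDegree_anti (hw : ∀ K, 0 ≤ w K) {S T : Finset X} (h : S ⊆ T) :
    setDegree w T ≤ setDegree w S :=
  sum_le_sum_of_subset_of_nonneg (monotone_filter_right _ fun _ _ hT => h.trans hT)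
    fun K _ _ => hw K

theorem setDegree_add (w v : Finset X → ℝ) (S : Finset X) :
    setDegree (w + v) S = setDegree w S + setDegree v S :=
  sum_add_distrib

theorem setDegree_smul (c : ℝ) (w : Finset X → ℝ) (S : Finset X) :
    setDegree (c • w) S = c * setDegree w S :=
  (mul_sum _ _ _).symm

theorem setDegree_sum {ι : Type*} (s : Finset ι) (w : ι → Finset X → ℝ) (S : Finset X) :
    setDegree (∑ i ∈ s, w i) S = ∑ i ∈ s, setDegree (w i) S := by
  simp only [setDegree, Finset.sum_apply]
  exact sum_comm

theorem setDegree_le_mul {v : Finset X → ℝ} {c : ℝ} (h : ∀ K, v K ≤ c * w K) (S : Finset X) :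
    setDegree v S ≤ c * setDegree w S := by
  rw [setDegree, setDegree, mul_sum]
  exact sum_le_sum fun K _ => h K

theorem setDegree_eq_zero {U S : Finset X} (hU : ∀ K, w K ≠ 0 → K ⊆ U) (hS : ¬ S ⊆ U) :
    setDegree w S = 0 :=
  sum_eq_zero fun K hK => by_contra fun h => hS ((mem_filter.1 hK).2.trans (hU K h))

theorem codegree_nonneg (hw : ∀ K, 0 ≤ w K) (x y : X) : 0 ≤ codegree w x y := by
  rw [codegree]
  split_ifs
  exacts [le_rfl, setDegree_nonneg hw _]

theorem codegree_of_ne {x y : X} (h : x ≠ y) : codegree w x y = setDegree w {x, y} := if_neg h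

theorem codegree_comm (x y : X) : codegree w x y = codegree w y x := by
  simp only [codegree, eq_comm (a := x), pair_comm x]

theorem codegree_le_mul {v : Finset X → ℝ} {c : ℝ} (h : ∀ K, v K ≤ c * w K) (x y : X) :
    codegree v x y ≤ c * codegree w x y := by
  rw [codegree, codegree]
  split_ifs
  exacts [(mul_zero c).ge, setDegree_le_mul h _]

theorem codegree_eq_zero {U : Finset X} (hU : ∀ K, w K ≠ 0 → K ⊆ U) {x y : X} (hy : y ∉ U) :
    codegree w x y = 0 := by
  rw [codegree]
  split_ifs
  exacts [rfl, setDegree_eq_zero hU fun h => hy (h (by simp))]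

theorem sum_mul_sum_mem (f : X → ℝ) :
    ∑ K, w K * ∑ x ∈ K, f x = ∑ x, setDegree w {x} * f x := by
  simp only [setDegree, singleton_subset_iff, sum_filter, mul_sum, sum_mul, ite_mul, zero_mul]
  rw [sum_comm]
  exact sum_congr rfl fun K _ => by rw [sum_ite_mem, univ_inter]

theorem sum_setDegree_insert (S A : Finset X) :
    ∑ y ∈ A, setDegree w (insert y S) = ∑ K with S ⊆ K, w K * #(K ∩ A) := by
  calc ∑ y ∈ A, setDegree w (insert y S)
      = ∑ K with S ⊆ K, ∑ _y ∈ K ∩ A, w K := sum_comm' fun y K => by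
        simp only [mem_filter_univ, insert_subset_iff, mem_inter]; tauto
    _ = ∑ K with S ⊆ K, w K * #(K ∩ A) :=
        sum_congr rfl fun K _ => by rw [sum_const, nsmul_eq_mul, mul_comm]

theorem sum_offDiag_codegree (A : Finset X) :
    ∑ p ∈ A.offDiag, codegree w p.1 p.2 = ∑ K, w K * #(K ∩ A).offDiag := by
  calc ∑ p ∈ A.offDiag, codegree w p.1 p.2
      = ∑ p ∈ A.offDiag, setDegree w {p.1, p.2} :=
        sum_congr rfl fun p hp => codegree_of_ne (mem_offDiag.1 hp).2.2
    _ = ∑ K, ∑ _p ∈ (K ∩ A).offDiag, w K := sum_comm' fun p K => by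
        simp only [mem_offDiag, mem_filter_univ, insert_subset_iff, singleton_subset_iff, mem_inter,
          mem_univ]
        tauto
    _ = ∑ K, w K * #(K ∩ A).offDiag :=
        sum_congr rfl fun K _ => by rw [sum_const, nsmul_eq_mul, mul_comm]

theorem sum_setDegree_singleton : ∑ x, setDegree w {x} = ∑ K, w K * #K := by
  simpa using (sum_mul_sum_mem (w := w) fun _ => 1).symm

theorem sum_codegree (x : X) (A : Finset X) :
    ∑ y ∈ A, codegree w x y = ∑ K with {x} ⊆ K, w K * #(K ∩ A.erase x) := by
  rw [← sum_setDegree_insert, ← sum_erase A (if_pos rfl : codegree w x x = 0)]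
  exact sum_congr rfl fun y hy => by rw [codegree_of_ne (ne_of_mem_erase hy).symm, pair_comm]

end SetDegree

section Reweight

theorem card_sub_one_le_card_offDiag {X : Type*} (S : Finset X) : (#S : ℝ) - 1 ≤ #S.offDiag := by
  rw [offDiag_card, Nat.cast_sub (Nat.le_mul_self _), Nat.cast_mul]
  nlinarith [sq_nonneg ((#S : ℝ) - 1)]

variable {X : Type*} [Fintype X] [DecidableEq X] {w : Finset X → ℝ} {m : ℕ}

/-- The weighted hypergraph left after choosing the hyperedge `K₀` in the nibble: hyperedges
meeting `K₀` are removed and every other hyperedge `K` is boosted by `1 + (#K - 1) / W`, where `W`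
is the total weight. For random `K₀` and degrees `1` this keeps the expected degree of a vertex
outside `K₀` at `1` to first order. -/
noncomputable def reweight (w : Finset X → ℝ) (K₀ K : Finset X) : ℝ :=
  if Disjoint K K₀ then w K * (1 + (#K - 1) / totalWeight w) else 0

/-- The weight of the hyperedges containing `S`, each counted with the number of ordered pairs of
distinct vertices it shares with `K₀`. It bounds the second-order error in inclusion-exclusion. -/
noncomputable def overlap (w : Finset X → ℝ) (S K₀ : Finset X) : ℝ :=
  ∑ K with S ⊆ K, w K * #(K ∩ K₀).offDiag

theorem overlap_nonneg (hw : ∀ K, 0 ≤ w K) (S K₀ : Finset X) : 0 ≤ overlap w S K₀ :=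
  sum_nonneg fun K _ => mul_nonneg (hw K) (Nat.cast_nonneg _)

/-- The first-order approximation, in the codegrees, of the degree of `x` in `reweight w K₀`. -/
noncomputable def linearizedDegree (w : Finset X → ℝ) (K₀ : Finset X) (x : X) : ℝ :=
  setDegree w {x} + (∑ y, codegree w x y) / totalWeight w - ∑ y ∈ K₀, codegree w x y

/-- A bound for the error of `linearizedDegree` when the hyperedges have size at most `m`. -/
noncomputable def linearizationError (w : Finset X → ℝ) (m : ℕ) (K₀ : Finset X) (x : X) : ℝ :=
  overlap w {x} K₀ + m / totalWeight w * ∑ y ∈ K₀, codegree w x y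

theorem linearizationError_nonneg (hw : ∀ K, 0 ≤ w K) (K₀ : Finset X) (x : X) :
    0 ≤ linearizationError w m K₀ x :=
  add_nonneg (overlap_nonneg hw {x} K₀)
    (mul_nonneg (div_nonneg m.cast_nonneg (totalWeight_nonneg hw))
      (sum_nonneg fun y _ => codegree_nonneg hw x y))

theorem reweight_nonneg (hw : ∀ K, 0 ≤ w K) (hW : 1 ≤ totalWeight w) (K₀ K : Finset X) :
    0 ≤ reweight w K₀ K := by
  rw [reweight]
  split_ifs
  · have h_inv : 1 / totalWeight w ≤ 1 := div_le_one_of_le₀ hW (by linarith)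
    have h_card : 0 ≤ (#K : ℝ) / totalWeight w := by positivity
    exact mul_nonneg (hw K) (by rw [sub_div]; linarith)
  · rfl

theorem reweight_le (hw : ∀ K, 0 ≤ w K) (hm : ∀ K, w K ≠ 0 → #K ≤ m) (K₀ K : Finset X) :
    reweight w K₀ K ≤ (1 + m / totalWeight w) * w K := by
  have hwK := hw K
  have hW := totalWeight_nonneg hw
  rw [reweight]
  split_ifs
  · rcases eq_or_ne (w K) 0 with h0 | h0
    · simp [h0]
    rw [mul_comm]
    have hKm : (#K : ℝ) ≤ m := mod_cast hm K h0
    gcongr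
    linarith
  · positivity

theorem ne_zero_and_disjoint_of_reweight_ne_zero {K₀ K : Finset X} (h : reweight w K₀ K ≠ 0) :
    w K ≠ 0 ∧ Disjoint K K₀ := by
  rw [reweight] at h
  split_ifs at h with hd
  exacts [⟨left_ne_zero_of_mul h, hd⟩, absurd rfl h]

theorem reweight_le_mul_add_card_offDiag (hw : ∀ K, 0 ≤ w K) (K₀ K : Finset X) :
    reweight w K₀ K ≤
      w K * (1 + (#K - 1) / totalWeight w - #(K ∩ K₀) + #(K ∩ K₀).offDiag) := by
  rw [reweight]
  split_ifs with h
  · rw [disjoint_iff_inter_eq_empty.1 h]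
    simp
  · have h_pos : 0 < #K := card_pos.2 (nonempty_iff_ne_empty.2 fun h0 => h (by simp [h0]))
    have h_boost : 0 ≤ ((#K : ℝ) - 1) / totalWeight w :=
      div_nonneg (sub_nonneg.2 (mod_cast h_pos)) (totalWeight_nonneg hw)
    exact mul_nonneg (hw K) (by linarith [card_sub_one_le_card_offDiag (K ∩ K₀)])

theorem mul_sub_card_inter_le_reweight (hw : ∀ K, 0 ≤ w K) (hm : ∀ K, w K ≠ 0 → #K ≤ m)
    (K₀ K : Finset X) :
    w K * (1 + (#K - 1) / totalWeight w - (1 + m / totalWeight w) * #(K ∩ K₀)) ≤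
      reweight w K₀ K := by
  rw [reweight]
  split_ifs with h
  · rw [disjoint_iff_inter_eq_empty.1 h]
    simp
  · rcases eq_or_ne (w K) 0 with h0 | h0
    · simp [h0]
    have h_inter : (1 : ℝ) ≤ #(K ∩ K₀) := mod_cast card_pos.2 (not_disjoint_iff_nonempty_inter.1 h)
    have hKm : (#K : ℝ) - 1 ≤ m := by linarith [show (#K : ℝ) ≤ m from mod_cast hm K h0]
    have hW := totalWeight_nonneg hw
    refine mul_nonpos_of_nonneg_of_nonpos (hw K) (sub_nonpos.2 ?_)
    calc (1 : ℝ) + (#K - 1) / totalWeight w ≤ 1 + m / totalWeight w := by gcongr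
      _ ≤ _ := le_mul_of_one_le_right (by positivity) h_inter

theorem setDegree_reweight_le (hw : ∀ K, 0 ≤ w K) (K₀ S : Finset X) :
    setDegree (reweight w K₀) S ≤
      setDegree w S + (∑ K with S ⊆ K, w K * (#K - 1)) / totalWeight w -
        ∑ K with S ⊆ K, w K * #(K ∩ K₀) + overlap w S K₀ := by
  rw [setDegree, setDegree, overlap, sum_div, ← sum_add_distrib, ← sum_sub_distrib,
    ← sum_add_distrib]
  refine sum_le_sum fun K _ => (reweight_le_mul_add_card_offDiag hw K₀ K).trans_eq ?_
  ring

theorem le_setDegree_reweight (hw : ∀ K, 0 ≤ w K) (hm : ∀ K, w K ≠ 0 → #K ≤ m)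
    (K₀ S : Finset X) :
    setDegree w S + (∑ K with S ⊆ K, w K * (#K - 1)) / totalWeight w -
        (1 + m / totalWeight w) * ∑ K with S ⊆ K, w K * #(K ∩ K₀) ≤
      setDegree (reweight w K₀) S := by
  rw [setDegree, setDegree, mul_sum, sum_div, ← sum_add_distrib, ← sum_sub_distrib]
  refine sum_le_sum fun K _ => (mul_sub_card_inter_le_reweight hw hm K₀ K).trans_eq' ?_
  ring

theorem linearizedDegree_eq {K₀ : Finset X} {x : X} (hx : x ∉ K₀) :
    linearizedDegree w K₀ x =
      setDegree w {x} + (∑ K with {x} ⊆ K, w K * (#K - 1)) / totalWeight w -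
        ∑ K with {x} ⊆ K, w K * #(K ∩ K₀) := by
  rw [linearizedDegree, sum_codegree, sum_codegree, erase_eq_of_notMem hx]
  congr 3
  refine sum_congr rfl fun K hK => ?_
  have hxK : x ∈ K := singleton_subset_iff.1 (mem_filter.1 hK).2
  rw [inter_erase, inter_univ, card_erase_of_mem hxK, Nat.cast_pred (card_pos.2 ⟨x, hxK⟩)]

theorem abs_setDegree_reweight_sub_linearizedDegree_le (hw : ∀ K, 0 ≤ w K)
    (hm : ∀ K, w K ≠ 0 → #K ≤ m) {K₀ : Finset X} {x : X} (hx : x ∉ K₀) :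
    |setDegree (reweight w K₀) {x} - linearizedDegree w K₀ x| ≤ linearizationError w m K₀ x := by
  have h_link : ∑ y ∈ K₀, codegree w x y = ∑ K with {x} ⊆ K, w K * #(K ∩ K₀) := by
    rw [sum_codegree, erase_eq_of_notMem hx]
  have h_link_nonneg : 0 ≤ m / totalWeight w * ∑ y ∈ K₀, codegree w x y :=
    mul_nonneg (div_nonneg m.cast_nonneg (totalWeight_nonneg hw))
      (sum_nonneg fun y _ => codegree_nonneg hw x y)
  have h_overlap := overlap_nonneg hw {x} K₀
  have h_upper := setDegree_reweight_le hw K₀ {x}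
  have h_lower := le_setDegree_reweight hw hm K₀ {x}
  rw [← h_link] at h_upper h_lower
  rw [linearizedDegree_eq hx, ← h_link, linearizationError, abs_le]
  constructor <;> linarith

end Reweight

section Averaging

theorem sum_mul_le_sum_mul_of_ne_zero {ι : Type*} {s : Finset ι} {w f g : ι → ℝ}
    (hw : ∀ i, 0 ≤ w i) (h : ∀ i, w i ≠ 0 → f i ≤ g i) :
    ∑ i ∈ s, w i * f i ≤ ∑ i ∈ s, w i * g i := by
  refine sum_le_sum fun i _ => ?_
  rcases eq_or_ne (w i) 0 with h0 | h0
  · simp [h0]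
  · exact mul_le_mul_of_nonneg_left (h i h0) (hw i)

theorem sq_le_sq_add_mul_of_abs_sub_le {a b r R : ℝ} (h_sub : |a - b| ≤ r) (h_add : |a + b| ≤ R) :
    a ^ 2 ≤ b ^ 2 + R * r := by
  have h : (a - b) * (a + b) ≤ r * R := (le_abs_self _).trans <| by
    rw [abs_mul]
    exact mul_le_mul h_sub h_add (abs_nonneg _) ((abs_nonneg _).trans h_sub)
  linarith

theorem natCast_div_le_mul {W κ : ℝ} (hW : 0 < W) (hκW : 1 ≤ κ * W) (m : ℕ) :
    m / W ≤ m * κ := by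
  rw [div_le_iff₀ hW, mul_assoc]
  exact le_mul_of_one_le_right m.cast_nonneg hκW

theorem neg_sum_sum_mul_mul_le {ι : Type*} {U : Finset ι} {c : ι → ι → ℝ} {r : ℝ}
    (hc : ∀ x y, 0 ≤ c x y) (hsymm : ∀ x y, c x y = c y x) (hr : ∀ x ∈ U, ∑ y ∈ U, c x y ≤ r)
    (e : ι → ℝ) :
    -∑ x ∈ U, ∑ y ∈ U, c x y * (e x * e y) ≤ r * ∑ x ∈ U, e x ^ 2 := by
  have h_swap : ∑ x ∈ U, ∑ y ∈ U, c x y * e y ^ 2 = ∑ x ∈ U, ∑ y ∈ U, c x y * e x ^ 2 := by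
    rw [sum_comm]
    simp only [hsymm]
  have h_sq : 0 ≤ ∑ x ∈ U, ∑ y ∈ U, c x y * (e x + e y) ^ 2 :=
    sum_nonneg fun x _ => sum_nonneg fun y _ => mul_nonneg (hc x y) (sq_nonneg _)
  have h_expand : ∑ x ∈ U, ∑ y ∈ U, c x y * (e x + e y) ^ 2 =
      ∑ x ∈ U, ∑ y ∈ U, c x y * e x ^ 2 + ∑ x ∈ U, ∑ y ∈ U, c x y * e y ^ 2 +
        2 * ∑ x ∈ U, ∑ y ∈ U, c x y * (e x * e y) := by
    simp only [mul_sum, ← sum_add_distrib]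
    exact sum_congr rfl fun x _ => sum_congr rfl fun y _ => by ring
  have h_row : ∑ x ∈ U, ∑ y ∈ U, c x y * e x ^ 2 ≤ r * ∑ x ∈ U, e x ^ 2 := by
    simp only [← sum_mul, mul_sum]
    exact sum_le_sum fun x hx => mul_le_mul_of_nonneg_right (hr x hx) (sq_nonneg _)
  linarith

variable {X : Type*} [Fintype X] [DecidableEq X] {w : Finset X → ℝ} {U : Finset X} {m : ℕ}
  {B κ : ℝ}

theorem sum_setDegree_singleton_le (hw : ∀ K, 0 ≤ w K) (hm : ∀ K, w K ≠ 0 → #K ≤ m)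
    (U : Finset X) : ∑ x ∈ U, setDegree w {x} ≤ m * totalWeight w := by
  calc ∑ x ∈ U, setDegree w {x} ≤ ∑ x, setDegree w {x} :=
        sum_le_univ_sum_of_nonneg fun x => setDegree_nonneg hw _
    _ = ∑ K, w K * #K := sum_setDegree_singleton
    _ ≤ ∑ K, w K * m :=
        sum_mul_le_sum_mul_of_ne_zero hw fun K hK => mod_cast hm K hK
    _ = m * totalWeight w := by rw [← sum_mul, mul_comm, totalWeight]

/-- The weighted hypergraph `w` has nonnegative weights, hyperedges of size at most `m`, degrees at
most `B` and codegrees at most `κ`. -/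
structure HasDegreeBounds (w : Finset X → ℝ) (m : ℕ) (B κ : ℝ) : Prop where
  nonneg : ∀ K, 0 ≤ w K
  card_le : ∀ K, w K ≠ 0 → #K ≤ m
  degree_le : ∀ x, setDegree w {x} ≤ B
  codegree_le : ∀ x y, codegree w x y ≤ κ

/-- The squared deviation from `1` of the degrees of the vertices in `U`. -/
noncomputable def deviation (U : Finset X) (w : Finset X → ℝ) : ℝ :=
  ∑ x ∈ U, (setDegree w {x} - 1) ^ 2

theorem deviation_nonneg (U : Finset X) (w : Finset X → ℝ) : 0 ≤ deviation U w :=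
  sum_nonneg fun _ _ => sq_nonneg _

theorem sum_setDegree_sub_sq_le {η : ℝ} (hη : 0 < η) (U : Finset X) (w : Finset X → ℝ) :
    ∑ x ∈ U, setDegree w {x} - ∑ x ∈ U, setDegree w {x} ^ 2 ≤ η * #U + deviation U w / η := by
  rw [deviation, ← sum_sub_distrib, sum_div, mul_comm η, ← nsmul_eq_mul, ← sum_const,
    ← sum_add_distrib]
  refine sum_le_sum fun x _ => ?_
  set e := setDegree w {x} - 1 with he
  have h_am_gm : -e ≤ η + e ^ 2 / η := by
    rw [← sub_le_iff_le_add', le_div_iff₀ hη]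
    nlinarith [sq_nonneg (η + e), sq_nonneg e, sq_nonneg η]
  rw [show setDegree w {x} = e + 1 by rw [he]; ring]
  nlinarith [sq_nonneg e]

namespace HasDegreeBounds

theorem sum_codegree_le (h : HasDegreeBounds w m B κ) (x : X) : ∑ y, codegree w x y ≤ m * B := by
  rw [sum_codegree]
  calc ∑ K with {x} ⊆ K, w K * #(K ∩ univ.erase x) ≤ ∑ K with {x} ⊆ K, w K * m := by
        refine sum_mul_le_sum_mul_of_ne_zero h.nonneg fun K hK => ?_
        exact mod_cast (card_le_card inter_subset_left).trans (h.card_le K hK)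
    _ = m * setDegree w {x} := by rw [← sum_mul, mul_comm, setDegree]
    _ ≤ m * B := mul_le_mul_of_nonneg_left (h.degree_le x) m.cast_nonneg

theorem sum_mul_overlap_le (h : HasDegreeBounds w m B κ) (hκ : 0 ≤ κ) (S : Finset X) :
    ∑ K₀, w K₀ * overlap w S K₀ ≤ m ^ 2 * κ * setDegree w S := by
  have h_pairs : ∀ K, w K ≠ 0 → ∑ p ∈ K.offDiag, codegree w p.1 p.2 ≤ m ^ 2 * κ := fun K hK => by
    have h_card : #K.offDiag ≤ m ^ 2 := by
      rw [offDiag_card, sq]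
      exact (Nat.sub_le _ _).trans (Nat.mul_self_le_mul_self (h.card_le K hK))
    calc ∑ p ∈ K.offDiag, codegree w p.1 p.2 ≤ #K.offDiag • κ :=
          sum_le_card_nsmul _ _ _ fun p _ => h.codegree_le _ _
      _ ≤ m ^ 2 * κ := by rw [nsmul_eq_mul]; gcongr; exact mod_cast h_card
  calc ∑ K₀, w K₀ * overlap w S K₀
      = ∑ K with S ⊆ K, w K * ∑ p ∈ K.offDiag, codegree w p.1 p.2 := by
        simp only [overlap, sum_offDiag_codegree, mul_sum]
        rw [sum_comm]
        refine sum_congr rfl fun K _ => sum_congr rfl fun K₀ _ => ?_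
        rw [inter_comm]
        ring
    _ ≤ ∑ K with S ⊆ K, w K * (m ^ 2 * κ) := sum_mul_le_sum_mul_of_ne_zero h.nonneg h_pairs
    _ = m ^ 2 * κ * setDegree w S := by rw [← sum_mul, mul_comm, setDegree]

theorem sum_mul_sum_codegree_le (h : HasDegreeBounds w m B κ) (x : X) :
    ∑ K₀, w K₀ * ∑ y ∈ K₀, codegree w x y ≤ m * B ^ 2 := by
  have hB : 0 ≤ B := (setDegree_nonneg h.nonneg _).trans (h.degree_le x)
  rw [sum_mul_sum_mem]
  calc ∑ y, setDegree w {y} * codegree w x y ≤ ∑ y, B * codegree w x y :=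
        sum_le_sum fun y _ =>
          mul_le_mul_of_nonneg_right (h.degree_le y) (codegree_nonneg h.nonneg x y)
    _ = B * ∑ y, codegree w x y := (mul_sum _ _ _).symm
    _ ≤ B * (m * B) := mul_le_mul_of_nonneg_left (h.sum_codegree_le x) hB
    _ = m * B ^ 2 := by ring

theorem codegree_bound_nonneg (h : HasDegreeBounds w m B κ) (x : X) : 0 ≤ κ :=
  (codegree_nonneg h.nonneg x x).trans (h.codegree_le x x)

theorem sum_codegree_le_card_mul (h : HasDegreeBounds w m B κ) (x : X) {K₀ : Finset X}
    (hK₀ : #K₀ ≤ m) : ∑ y ∈ K₀, codegree w x y ≤ m * κ := by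
  have hκ := h.codegree_bound_nonneg x
  calc ∑ y ∈ K₀, codegree w x y ≤ #K₀ • κ := sum_le_card_nsmul _ _ _ fun y _ => h.codegree_le x y
    _ ≤ m * κ := by rw [nsmul_eq_mul]; gcongr

theorem sum_codegree_div_le (h : HasDegreeBounds w m B κ) (hW : 0 < totalWeight w)
    (hκW : 1 ≤ κ * totalWeight w) (x : X) :
    (∑ y, codegree w x y) / totalWeight w ≤ m * B * κ := by
  have hB : 0 ≤ B := (setDegree_nonneg h.nonneg _).trans (h.degree_le x)
  rw [div_le_iff₀ hW, mul_assoc (_ * _)]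
  exact (h.sum_codegree_le x).trans (le_mul_of_one_le_right (by positivity) hκW)

theorem setDegree_reweight_singleton_le (h : HasDegreeBounds w m B κ) (hB : 1 ≤ B)
    (hmκ : m * B * κ ≤ 1) (hW : 0 < totalWeight w) (hκW : 1 ≤ κ * totalWeight w)
    (K₀ : Finset X) (x : X) : setDegree (reweight w K₀) {x} ≤ 2 * B := by
  have hκ := h.codegree_bound_nonneg x
  have h_boost : m / totalWeight w ≤ 1 :=
    calc m / totalWeight w ≤ m * κ := natCast_div_le_mul hW hκW m
      _ ≤ m * B * κ := by gcongr; exact le_mul_of_one_le_right m.cast_nonneg hB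
      _ ≤ 1 := hmκ
  calc setDegree (reweight w K₀) {x} ≤ (1 + m / totalWeight w) * setDegree w {x} :=
        setDegree_le_mul (reweight_le h.nonneg h.card_le K₀) {x}
    _ ≤ (1 + 1) * B := by gcongr; exacts [setDegree_nonneg h.nonneg _, h.degree_le x]
    _ = 2 * B := by ring

theorem sq_setDegree_reweight_sub_one_le (h : HasDegreeBounds w m B κ) (hB : 1 ≤ B)
    (hmκ : m * B * κ ≤ 1) (hW : 1 ≤ totalWeight w) (hκW : 1 ≤ κ * totalWeight w)
    {K₀ : Finset X} (hK₀ : #K₀ ≤ m) {x : X} (hx : x ∉ K₀) :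
    (setDegree (reweight w K₀) {x} - 1) ^ 2 ≤ (linearizedDegree w K₀ x - 1) ^ 2 +
      4 * B * linearizationError w m K₀ x := by
  have hW0 : 0 < totalWeight w := by linarith
  have hκ := h.codegree_bound_nonneg x
  have hmκ' : m * κ ≤ 1 :=
    le_trans (by gcongr; exact le_mul_of_one_le_right m.cast_nonneg hB) hmκ
  have h_new_nonneg := setDegree_nonneg (reweight_nonneg h.nonneg hW K₀) {x}
  have h_new_le := h.setDegree_reweight_singleton_le hB hmκ hW0 hκW K₀ x
  have h_old_nonneg := setDegree_nonneg h.nonneg {x}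
  have h_old_le := h.degree_le x
  have h_gain_nonneg : 0 ≤ (∑ y, codegree w x y) / totalWeight w :=
    div_nonneg (sum_nonneg fun y _ => codegree_nonneg h.nonneg x y) hW0.le
  have h_gain_le := h.sum_codegree_div_le hW0 hκW x
  have h_loss_nonneg : 0 ≤ ∑ y ∈ K₀, codegree w x y :=
    sum_nonneg fun y _ => codegree_nonneg h.nonneg x y
  have h_loss_le := h.sum_codegree_le_card_mul x hK₀
  refine sq_le_sq_add_mul_of_abs_sub_le ?_ (abs_le.2 ⟨?_, ?_⟩)
  · rw [sub_sub_sub_cancel_right]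
    exact abs_setDegree_reweight_sub_linearizedDegree_le h.nonneg h.card_le hx
  all_goals rw [linearizedDegree]; linarith

theorem sq_linearizedDegree_sub_one_le (h : HasDegreeBounds w m B κ) (hB : 1 ≤ B)
    (hW : 0 < totalWeight w) (hκW : 1 ≤ κ * totalWeight w) {K₀ : Finset X} (hK₀ : #K₀ ≤ m)
    (x : X) :
    (linearizedDegree w K₀ x - 1) ^ 2 ≤ (setDegree w {x} - 1) ^ 2 +
      2 * (setDegree w {x} - 1) *
        ((∑ y, codegree w x y) / totalWeight w - ∑ y ∈ K₀, codegree w x y) +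
      m * B * κ * ((∑ y, codegree w x y) / totalWeight w + ∑ y ∈ K₀, codegree w x y) := by
  have hκ := h.codegree_bound_nonneg x
  have h_gain_nonneg : 0 ≤ (∑ y, codegree w x y) / totalWeight w :=
    div_nonneg (sum_nonneg fun y _ => codegree_nonneg h.nonneg x y) hW.le
  have h_gain_le := h.sum_codegree_div_le hW hκW x
  have h_loss_nonneg : 0 ≤ ∑ y ∈ K₀, codegree w x y :=
    sum_nonneg fun y _ => codegree_nonneg h.nonneg x y
  have h_loss_le : ∑ y ∈ K₀, codegree w x y ≤ m * B * κ :=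
    (h.sum_codegree_le_card_mul x hK₀).trans (by gcongr; exact le_mul_of_one_le_right (by simp) hB)
  rw [linearizedDegree]
  nlinarith

theorem sum_mul_sq_linearizedDegree_sub_one_le (h : HasDegreeBounds w m B κ) (hB : 1 ≤ B)
    (hW : 0 < totalWeight w) (hκW : 1 ≤ κ * totalWeight w) (x : X) :
    ∑ K₀, w K₀ * (linearizedDegree w K₀ x - 1) ^ 2 ≤
      totalWeight w * (setDegree w {x} - 1) ^ 2 -
        2 * ∑ y, codegree w x y * ((setDegree w {x} - 1) * (setDegree w {y} - 1)) +
        2 * m ^ 2 * B ^ 3 * κ := by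
  have hκ := h.codegree_bound_nonneg x
  have h_mean : ∑ y, codegree w x y * ((setDegree w {x} - 1) * (setDegree w {y} - 1)) =
      (setDegree w {x} - 1) *
        (∑ K₀, w K₀ * ∑ y ∈ K₀, codegree w x y - ∑ y, codegree w x y) := by
    rw [sum_mul_sum_mem, ← sum_sub_distrib, mul_sum]
    exact sum_congr rfl fun y _ => by ring
  have h_loss := h.sum_mul_sum_codegree_le x
  have h_gain : ∑ y, codegree w x y ≤ m * B ^ 2 :=
    (h.sum_codegree_le x).trans (by gcongr; exact le_self_pow₀ hB two_ne_zero)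
  set e := setDegree w {x} - 1
  set σ := ∑ y, codegree w x y
  set H := ∑ K₀, w K₀ * ∑ y ∈ K₀, codegree w x y
  calc ∑ K₀, w K₀ * (linearizedDegree w K₀ x - 1) ^ 2
      ≤ ∑ K₀, w K₀ * (e ^ 2 + 2 * e * (σ / totalWeight w - ∑ y ∈ K₀, codegree w x y) +
          m * B * κ * (σ / totalWeight w + ∑ y ∈ K₀, codegree w x y)) :=
        sum_mul_le_sum_mul_of_ne_zero h.nonneg fun K₀ hK₀ =>
          h.sq_linearizedDegree_sub_one_le hB hW hκW (h.card_le K₀ hK₀) x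
    _ = totalWeight w * (e ^ 2 + 2 * e * (σ / totalWeight w) +
          m * B * κ * (σ / totalWeight w)) + (m * B * κ - 2 * e) * H := by
        simp only [H, totalWeight, sum_mul, mul_sum (s := (univ : Finset (Finset X))),
          ← sum_add_distrib]
        exact sum_congr rfl fun K₀ _ => by ring
    _ = totalWeight w * e ^ 2 - 2 * (e * (H - σ)) + m * B * κ * (σ + H) := by
        field_simp
        ring
    _ ≤ totalWeight w * e ^ 2 - 2 * (e * (H - σ)) + m * B * κ * (m * B ^ 2 + m * B ^ 2) := by
        gcongr
    _ = _ := by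
        rw [h_mean]
        ring

theorem sum_mul_linearizationError_le (h : HasDegreeBounds w m B κ) (hB : 1 ≤ B)
    (hW : 0 < totalWeight w) (hκW : 1 ≤ κ * totalWeight w) (x : X) :
    ∑ K₀, w K₀ * linearizationError w m K₀ x ≤ 2 * m ^ 2 * B ^ 2 * κ := by
  have hκ := h.codegree_bound_nonneg x
  have h_overlap : ∑ K₀, w K₀ * overlap w {x} K₀ ≤ m ^ 2 * κ * B ^ 2 := by
    refine (h.sum_mul_overlap_le hκ {x}).trans ?_
    gcongr
    exact (h.degree_le x).trans (le_self_pow₀ hB two_ne_zero)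
  calc ∑ K₀, w K₀ * linearizationError w m K₀ x
      = ∑ K₀, w K₀ * overlap w {x} K₀ +
          m / totalWeight w * ∑ K₀, w K₀ * ∑ y ∈ K₀, codegree w x y := by
        rw [mul_sum, ← sum_add_distrib]
        exact sum_congr rfl fun K₀ _ => by rw [linearizationError]; ring
    _ ≤ m ^ 2 * κ * B ^ 2 + m / totalWeight w * (m * B ^ 2) := by
        gcongr
        exact h.sum_mul_sum_codegree_le x
    _ ≤ m ^ 2 * κ * B ^ 2 + m * κ * (m * B ^ 2) := by
        gcongr
        exact natCast_div_le_mul hW hκW m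
    _ = _ := by ring

theorem deviation_reweight_le (h : HasDegreeBounds w m B κ) (hB : 1 ≤ B) (hmκ : m * B * κ ≤ 1)
    (hW : 1 ≤ totalWeight w) (hκW : 1 ≤ κ * totalWeight w) {K₀ : Finset X} (hK₀ : #K₀ ≤ m) :
    deviation (U \ K₀) (reweight w K₀) ≤
      ∑ x ∈ U, ((linearizedDegree w K₀ x - 1) ^ 2 + 4 * B * linearizationError w m K₀ x) :=
  (sum_le_sum fun _x hx =>
    h.sq_setDegree_reweight_sub_one_le hB hmκ hW hκW hK₀ (mem_sdiff.1 hx).2).trans <|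
  sum_le_sum_of_subset_of_nonneg sdiff_subset fun x _ _ =>
    add_nonneg (sq_nonneg _) (mul_nonneg (by linarith) (linearizationError_nonneg h.nonneg K₀ x))

theorem sum_mul_deviation_reweight_le (h : HasDegreeBounds w m B κ)
    (hU : ∀ K, w K ≠ 0 → K ⊆ U) (hB : 1 ≤ B) (hmκ : m * B * κ ≤ 1) (hW : 1 ≤ totalWeight w)
    (hκW : 1 ≤ κ * totalWeight w) :
    ∑ K₀, w K₀ * deviation (U \ K₀) (reweight w K₀) ≤
      (totalWeight w + 2 * m * B) * deviation U w + 10 * m ^ 2 * B ^ 3 * κ * #U := by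
  have hW0 : 0 < totalWeight w := by linarith
  set e : X → ℝ := fun x => setDegree w {x} - 1
  have h_vertex : ∀ x, ∑ K₀, w K₀ * ((linearizedDegree w K₀ x - 1) ^ 2 +
        4 * B * linearizationError w m K₀ x) ≤
      totalWeight w * e x ^ 2 - 2 * ∑ y ∈ U, codegree w x y * (e x * e y) +
        10 * m ^ 2 * B ^ 3 * κ := fun x => by
    have h_supp : ∑ y, codegree w x y * (e x * e y) = ∑ y ∈ U, codegree w x y * (e x * e y) :=
      (sum_subset (subset_univ U) fun y _ hy => by rw [codegree_eq_zero hU hy, zero_mul]).symm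
    have h_main := h.sum_mul_sq_linearizedDegree_sub_one_le hB hW0 hκW x
    have h_rest := mul_le_mul_of_nonneg_left (h.sum_mul_linearizationError_le hB hW0 hκW x)
      (show 0 ≤ 4 * B by linarith)
    rw [h_supp] at h_main
    simp only [mul_add (w _), sum_add_distrib, mul_left_comm (w _) (4 * B), ← mul_sum]
    linarith
  have h_cross : -∑ x ∈ U, ∑ y ∈ U, codegree w x y * (e x * e y) ≤ m * B * deviation U w :=
    neg_sum_sum_mul_mul_le (codegree_nonneg h.nonneg) codegree_comm (fun x _ =>
      (sum_le_univ_sum_of_nonneg (codegree_nonneg h.nonneg x)).trans (h.sum_codegree_le x)) e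
  calc ∑ K₀, w K₀ * deviation (U \ K₀) (reweight w K₀)
      ≤ ∑ K₀, w K₀ * ∑ x ∈ U, ((linearizedDegree w K₀ x - 1) ^ 2 +
          4 * B * linearizationError w m K₀ x) :=
        sum_mul_le_sum_mul_of_ne_zero h.nonneg fun K₀ hK₀ =>
          h.deviation_reweight_le hB hmκ hW hκW (h.card_le K₀ hK₀)
    _ = ∑ x ∈ U, ∑ K₀, w K₀ * ((linearizedDegree w K₀ x - 1) ^ 2 +
          4 * B * linearizationError w m K₀ x) := by
        simp only [mul_sum]
        exact sum_comm
    _ ≤ ∑ x ∈ U, (totalWeight w * e x ^ 2 - 2 * ∑ y ∈ U, codegree w x y * (e x * e y) +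
          10 * m ^ 2 * B ^ 3 * κ) := sum_le_sum fun x _ => h_vertex x
    _ = totalWeight w * deviation U w + 2 * -∑ x ∈ U, ∑ y ∈ U, codegree w x y * (e x * e y) +
          10 * m ^ 2 * B ^ 3 * κ * #U := by
        rw [sum_add_distrib, sum_sub_distrib, ← mul_sum, ← mul_sum, sum_const, nsmul_eq_mul,
          deviation]
        ring
    _ ≤ _ := by linarith

theorem totalWeight_reweight_le (h : HasDegreeBounds w m B κ) (hU : ∀ K, w K ≠ 0 → K ⊆ U)
    (hW : 0 < totalWeight w) (K₀ : Finset X) :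
    totalWeight (reweight w K₀) ≤ totalWeight w - 1 +
      (∑ x ∈ U, setDegree w {x}) / totalWeight w - ∑ x ∈ K₀, setDegree w {x} +
        overlap w ∅ K₀ := by
  have h_supp : ∑ K, w K * (#K - 1) = ∑ x ∈ U, setDegree w {x} - totalWeight w := by
    rw [sum_subset (subset_univ U) fun x _ hx => setDegree_eq_zero hU (by simpa using hx),
      sum_setDegree_singleton, totalWeight, ← sum_sub_distrib]
    simp only [mul_sub, mul_one]
  have h_link := sum_setDegree_insert (w := w) ∅ K₀
  have h_first_order := setDegree_reweight_le h.nonneg K₀ ∅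
  simp only [empty_subset, filter_true, insert_empty_eq] at h_link h_first_order
  rw [← h_link, h_supp, sub_div, div_self hW.ne', setDegree_empty, setDegree_empty]
    at h_first_order
  linarith

theorem sum_mul_totalWeight_reweight_le (h : HasDegreeBounds w m B κ)
    (hU : ∀ K, w K ≠ 0 → K ⊆ U) (hW : 0 < totalWeight w) (hκ : 0 ≤ κ) {η : ℝ} (hη : 0 < η) :
    ∑ K₀, w K₀ * totalWeight (reweight w K₀) ≤
      totalWeight w * (totalWeight w - 1) + (η * #U + deviation U w / η) +
        m ^ 2 * κ * totalWeight w := by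
  have h_supp : ∑ K₀, w K₀ * ∑ x ∈ K₀, setDegree w {x} = ∑ x ∈ U, setDegree w {x} ^ 2 := by
    simp only [sum_mul_sum_mem, ← sq]
    refine (sum_subset (subset_univ U) fun x _ hx => ?_).symm
    rw [setDegree_eq_zero hU (by simpa using hx), zero_pow two_ne_zero]
  have h_overlap := h.sum_mul_overlap_le hκ ∅
  have h_loss := sum_setDegree_sub_sq_le hη U w
  set D := ∑ x ∈ U, setDegree w {x}
  calc ∑ K₀, w K₀ * totalWeight (reweight w K₀)
      ≤ ∑ K₀, w K₀ * (totalWeight w - 1 + D / totalWeight w - ∑ x ∈ K₀, setDegree w {x} +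
          overlap w ∅ K₀) :=
        sum_mul_le_sum_mul_of_ne_zero h.nonneg fun K₀ _ => h.totalWeight_reweight_le hU hW K₀
    _ = totalWeight w * (totalWeight w - 1 + D / totalWeight w) -
          ∑ x ∈ U, setDegree w {x} ^ 2 + ∑ K₀, w K₀ * overlap w ∅ K₀ := by
        simp only [mul_add (w _), mul_sub (w _), sum_add_distrib, sum_sub_distrib, ← sum_mul,
          h_supp, totalWeight]
        ring
    _ = totalWeight w * (totalWeight w - 1) + (D - ∑ x ∈ U, setDegree w {x} ^ 2) +
          ∑ K₀, w K₀ * overlap w ∅ K₀ := by field_simp; ring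
    _ ≤ _ := by
        rw [setDegree_empty] at h_overlap
        linarith

end HasDegreeBounds

end Averaging

section Nibble

theorem exists_ne_zero_le_of_sum_mul_le {ι : Type*} {s : Finset ι} {w f : ι → ℝ} {r : ℝ}
    (hw : ∀ i, 0 ≤ w i) (hs : 0 < ∑ i ∈ s, w i)
    (h : ∑ i ∈ s, w i * f i ≤ (∑ i ∈ s, w i) * r) : ∃ i, w i ≠ 0 ∧ f i ≤ r := by
  by_contra! h_lt
  obtain ⟨j, hj, hj0⟩ := exists_ne_zero_of_sum_ne_zero hs.ne'
  rw [sum_mul] at h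
  refine h.not_gt (sum_lt_sum (fun i _ => ?_) ⟨j, hj, ?_⟩)
  · rcases eq_or_ne (w i) 0 with h0 | h0
    · simp [h0]
    · exact mul_le_mul_of_nonneg_left (h_lt i h0).le (hw i)
  · exact mul_lt_mul_of_pos_left (h_lt j hj0) ((hw j).lt_of_ne' hj0)

variable {X : Type*} [DecidableEq X] {w v : Finset X → ℝ} {U : Finset X}
  {C : Finset (Finset X)} {m : ℕ} {B κ c : ℝ}

/-- A stage of the nibble: `C` consists of hyperedges of `w`, and `v` is a nonnegative weighting,
at most `c` times `w`, of hyperedges disjoint from those in `C`. -/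
structure IsResidual (w : Finset X → ℝ) (C : Finset (Finset X)) (c : ℝ) (v : Finset X → ℝ) :
    Prop where
  family : ∀ K ∈ C, w K ≠ 0
  nonneg : ∀ K, 0 ≤ v K
  le_mul : ∀ K, v K ≤ c * w K
  disjoint : ∀ K, v K ≠ 0 → Disjoint K (C.biUnion id)

namespace IsResidual

theorem refl (hw : ∀ K, 0 ≤ w K) : IsResidual w ∅ 1 w :=
  ⟨by simp, hw, by simp, by simp⟩

theorem ne_zero (hr : IsResidual w C c v) {K : Finset X} (hK : v K ≠ 0) : w K ≠ 0 := fun h0 =>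
  hK (le_antisymm (by simpa [h0] using hr.le_mul K) (hr.nonneg K))

theorem subset_sdiff (hr : IsResidual w C c v) (hU : ∀ K, w K ≠ 0 → K ⊆ U) {K : Finset X}
    (hK : v K ≠ 0) : K ⊆ U \ C.biUnion id :=
  Finset.subset_sdiff.2 ⟨hU K (hr.ne_zero hK), hr.disjoint K hK⟩

end IsResidual

variable [Fintype X]

theorem HasDegreeBounds.exists_reweight_le (h : HasDegreeBounds w m B κ)
    (hU : ∀ K, w K ≠ 0 → K ⊆ U) (hB : 1 ≤ B) (hmκ : m * B * κ ≤ 1) (hW : 1 ≤ totalWeight w)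
    (hκW : 1 ≤ κ * totalWeight w) {η l R δ : ℝ} (hη : 0 < η) (hl : 1 ≤ l)
    (hR : #U ≤ R * totalWeight w)
    (hδ : η * R + m ^ 2 * κ + 10 * l * m ^ 2 * B ^ 3 * κ * R ≤ δ) :
    ∃ K₀, w K₀ ≠ 0 ∧
      totalWeight (reweight w K₀) + l * deviation (U \ K₀) (reweight w K₀) ≤
        totalWeight w - (1 - δ) +
          l * (1 + (2 * m * B + 1 / η) / totalWeight w) * deviation U w := by
  have hW0 : 0 < totalWeight w := by linarith
  have hκ : 0 ≤ κ := (pos_of_mul_pos_left (by linarith) hW0.le).le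
  have h_weight := h.sum_mul_totalWeight_reweight_le hU hW0 hκ hη
  have h_dev := mul_le_mul_of_nonneg_left
    (h.sum_mul_deviation_reweight_le hU hB hmκ hW hκW) (show 0 ≤ l by linarith)
  have h_dev_nonneg : 0 ≤ deviation U w / η := div_nonneg (deviation_nonneg U w) hη.le
  have h_error : η * #U + m ^ 2 * κ * totalWeight w + 10 * l * m ^ 2 * B ^ 3 * κ * #U ≤
      δ * totalWeight w := by
    calc _ ≤ η * (R * totalWeight w) + m ^ 2 * κ * totalWeight w +
          10 * l * m ^ 2 * B ^ 3 * κ * (R * totalWeight w) := by gcongr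
      _ = (η * R + m ^ 2 * κ + 10 * l * m ^ 2 * B ^ 3 * κ * R) * totalWeight w := by ring
      _ ≤ δ * totalWeight w := by gcongr
  refine exists_ne_zero_le_of_sum_mul_le h.nonneg hW0 ?_
  calc ∑ K₀, w K₀ * (totalWeight (reweight w K₀) + l * deviation (U \ K₀) (reweight w K₀))
      = ∑ K₀, w K₀ * totalWeight (reweight w K₀) +
          l * ∑ K₀, w K₀ * deviation (U \ K₀) (reweight w K₀) := by
        simp only [mul_add, sum_add_distrib, mul_left_comm (w _) l, ← mul_sum]
    _ ≤ totalWeight w * (totalWeight w - (1 - δ)) +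
          l * (totalWeight w + 2 * m * B) * deviation U w + l * (deviation U w / η) := by
        linarith [le_mul_of_one_le_left h_dev_nonneg hl]
    _ = _ := by
        rw [← totalWeight]
        field_simp
        ring

namespace IsResidual

theorem hasDegreeBounds (hr : IsResidual w C c v) (h : HasDegreeBounds w m 1 κ) (hc : 0 ≤ c)
    (hcB : c ≤ B) {κ' : ℝ} (hcκ : c * κ ≤ κ') : HasDegreeBounds v m B κ' where
  nonneg := hr.nonneg
  card_le _ hK := h.card_le _ (hr.ne_zero hK)
  degree_le x := (setDegree_le_mul hr.le_mul {x}).trans <|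
    (mul_le_of_le_one_right hc (h.degree_le x)).trans hcB
  codegree_le x y := (codegree_le_mul hr.le_mul x y).trans <|
    (mul_le_mul_of_nonneg_left (h.codegree_le x y) hc).trans hcκ

theorem insert_reweight (hr : IsResidual w C c v) (hm : ∀ K, v K ≠ 0 → #K ≤ m)
    (hW : 1 ≤ totalWeight v) {q : ℝ} (hq : 1 + m / totalWeight v ≤ q) {K₀ : Finset X}
    (hK₀ : v K₀ ≠ 0) : IsResidual w (insert K₀ C) (q * c) (reweight v K₀) where
  family := (forall_mem_insert ..).2 ⟨hr.ne_zero hK₀, hr.family⟩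
  nonneg := reweight_nonneg hr.nonneg hW K₀
  le_mul K := by
    have hq0 : 0 ≤ q := le_trans (by positivity) hq
    calc reweight v K₀ K ≤ (1 + m / totalWeight v) * v K := reweight_le hr.nonneg hm K₀ K
      _ ≤ q * v K := mul_le_mul_of_nonneg_right hq (hr.nonneg K)
      _ ≤ q * (c * w K) := mul_le_mul_of_nonneg_left (hr.le_mul K) hq0
      _ = q * c * w K := (mul_assoc _ _ _).symm
  disjoint K hK := by
    obtain ⟨hK0, h_disj⟩ := ne_zero_and_disjoint_of_reweight_ne_zero hK
    rw [biUnion_insert, id, disjoint_union_right]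
    exact ⟨h_disj, hr.disjoint K hK0⟩

theorem exists_insert (hr : IsResidual w C c v) (hU : ∀ K, w K ≠ 0 → K ⊆ U)
    (h : HasDegreeBounds v m B κ) (hB : 1 ≤ B) (hmκ : m * B * κ ≤ 1) {W₀ η l R δ : ℝ}
    (hW₀ : 1 ≤ W₀) (hWv : W₀ ≤ totalWeight v) (hκW : 1 ≤ κ * W₀) (hη : 0 < η) (hl : 1 ≤ l)
    (hR : #U ≤ R * W₀) (hδ : η * R + m ^ 2 * κ + 10 * l * m ^ 2 * B ^ 3 * κ * R ≤ δ) :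
    ∃ K₀, IsResidual w (insert K₀ C) ((1 + m / W₀) * c) (reweight v K₀) ∧
      totalWeight (reweight v K₀) +
          l * deviation (U \ (insert K₀ C).biUnion id) (reweight v K₀) ≤
        totalWeight v - (1 - δ) +
          l * (1 + (2 * m * B + 1 / η) / W₀) * deviation (U \ C.biUnion id) v := by
  have hW₀' : 0 < W₀ := by linarith
  have hκ : 0 ≤ κ := (pos_of_mul_pos_left (by linarith) hW₀'.le).le
  have hR0 : 0 ≤ R := nonneg_of_mul_nonneg_left ((Nat.cast_nonneg _).trans hR) hW₀'
  have h_card : (#(U \ C.biUnion id) : ℝ) ≤ R * totalWeight v :=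
    calc (#(U \ C.biUnion id) : ℝ) ≤ #U := mod_cast card_le_card sdiff_subset
      _ ≤ R * W₀ := hR
      _ ≤ R * totalWeight v := by gcongr
  obtain ⟨K₀, hK₀, h_le⟩ := h.exists_reweight_le (fun _ hK => hr.subset_sdiff hU hK) hB hmκ
    (hW₀.trans hWv) (hκW.trans (by gcongr)) hη hl h_card hδ
  refine ⟨K₀, hr.insert_reweight h.card_le (hW₀.trans hWv) (by gcongr) hK₀, ?_⟩
  rw [biUnion_insert, id, union_comm, ← sup_eq_union, ← sdiff_sdiff_left]
  refine h_le.trans ?_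
  have h_dev := deviation_nonneg (U \ C.biUnion id) v
  gcongr

end IsResidual

theorem bounds_of_potential_le {W W' Φ l i δ : ℝ} (hδ0 : 0 ≤ δ) (hδ : δ ≤ 1 / 2)
    (hl : 1 ≤ δ * l) (hW' : 0 ≤ W') (hΦ : 0 ≤ Φ) (hi : 0 ≤ i)
    (h : W' + l * Φ ≤ W - (1 - δ) * i) : i ≤ (1 + 2 * δ) * W ∧ Φ ≤ δ * W := by
  have hl0 : 0 ≤ l * Φ := mul_nonneg (pos_of_mul_pos_right (by linarith) hδ0).le hΦ
  constructor
  · calc i ≤ (1 + 2 * δ) * ((1 - δ) * i) := by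
          linarith [mul_nonneg (mul_nonneg hδ0 (show 0 ≤ 1 - 2 * δ by linarith)) hi]
      _ ≤ (1 + 2 * δ) * W := by gcongr; linarith
  · calc Φ ≤ δ * (l * Φ) := by linarith [mul_le_mul_of_nonneg_right hl hΦ]
      _ ≤ δ * W := by
          gcongr
          linarith [mul_nonneg (show 0 ≤ 1 - δ by linarith) hi]

theorem exists_residual_of_step (hw : ∀ K, 0 ≤ w K) (hdev : deviation U w = 0)
    (hW : 1 ≤ totalWeight w) {q δ W₀ : ℝ} (hδ0 : 0 < δ) (hδ : δ ≤ 1 / 2) {lam : ℕ → ℝ}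
    (hlam : ∀ i : ℕ, i ≤ 3 * totalWeight w → 1 ≤ δ * lam i)
    (hstep : ∀ i : ℕ, (i + 1 : ℕ) ≤ 3 * totalWeight w → ∀ C v, IsResidual w C (q ^ i) v →
      W₀ < totalWeight v → ∃ K₀ v', IsResidual w (insert K₀ C) (q ^ (i + 1)) v' ∧
        totalWeight v' + lam (i + 1) * deviation (U \ (insert K₀ C).biUnion id) v' ≤
          totalWeight v - (1 - δ) + lam i * deviation (U \ C.biUnion id) v) :
    ∃ C c v, IsResidual w C c v ∧ #C ≤ (1 + 2 * δ) * totalWeight w ∧ totalWeight v ≤ W₀ ∧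
      deviation (U \ C.biUnion id) v ≤ δ * totalWeight w := by
  by_contra! h_large
  have h_bounds {i : ℕ} (hi : i ≤ 3 * totalWeight w) {C v} (hr : IsResidual w C (q ^ i) v)
      (hv : totalWeight v + lam i * deviation (U \ C.biUnion id) v ≤
        totalWeight w - (1 - δ) * i) :
      i ≤ (1 + 2 * δ) * totalWeight w ∧ deviation (U \ C.biUnion id) v ≤ δ * totalWeight w :=
    bounds_of_potential_le hδ0.le hδ (hlam i hi) (totalWeight_nonneg hr.nonneg)
      (deviation_nonneg _ _) i.cast_nonneg hv
  have h_descent : ∀ i : ℕ, i ≤ 3 * totalWeight w → ∃ C v, IsResidual w C (q ^ i) v ∧ #C ≤ i ∧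
      totalWeight v + lam i * deviation (U \ C.biUnion id) v ≤
        totalWeight w - (1 - δ) * i := by
    intro i
    induction i with
    | zero => exact fun _ => ⟨∅, w, by simpa using .refl hw, by simp, by simp [hdev]⟩
    | succ i ih =>
      intro hi
      have hi' : (i : ℝ) ≤ 3 * totalWeight w := le_trans (by simp) hi
      obtain ⟨C, v, hr, hC, hv⟩ := ih hi'
      obtain ⟨K₀, v', hr', hv'⟩ := hstep i hi C v hr <| by
        by_contra! h_small
        obtain ⟨hi, h_dev⟩ := h_bounds hi' hr hv
        exact (h_large C _ v hr ((Nat.cast_le.2 hC).trans hi) h_small).not_ge h_dev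
      refine ⟨insert K₀ C, v', hr', (card_insert_le _ _).trans (by lia), ?_⟩
      push_cast
      linarith
  have h_floor := Nat.floor_le (show 0 ≤ 2 * totalWeight w by linarith)
  have h_lt_floor := Nat.lt_floor_add_one (2 * totalWeight w)
  have hN : (⌊2 * totalWeight w⌋₊ + 1 : ℕ) ≤ 3 * totalWeight w := by push_cast; linarith
  obtain ⟨C, v, hr, -, hv⟩ := h_descent _ hN
  have h_le := (h_bounds hN hr hv).1
  push_cast at h_le
  nlinarith

theorem one_add_div_pow_le_exp_mul {a r M : ℝ} (ha : 0 ≤ a) (hM : 0 < M) {i : ℕ}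
    (hi : i ≤ r * M) : (1 + a / M) ^ i ≤ Real.exp (r * a) := by
  calc (1 + a / M) ^ i ≤ Real.exp (a / M) ^ i := by
        gcongr
        linarith [Real.add_one_le_exp (a / M)]
    _ = Real.exp (i * (a / M)) := (Real.exp_nat_mul _ _).symm
    _ ≤ Real.exp (r * M * (a / M)) := by gcongr
    _ = Real.exp (r * a) := by rw [mul_assoc, mul_div_cancel₀ _ hM.ne']

/-- The factor in front of the deviation in the potential `W + deviationFactor A δ M i *
deviation` of step `i` of the nibble, where `W` is the current and `M` the initial total weight.
It decays like `exp (-A * i / M)` to absorb the growth of the deviation, and is at least `1 / δ`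
for `i ≤ 3 * M`. -/
noncomputable def deviationFactor (A δ M : ℝ) (i : ℕ) : ℝ := Real.exp (A * (3 - i / M)) / δ

theorem one_le_mul_deviationFactor {A δ M : ℝ} (hA : 0 ≤ A) (hδ : 0 < δ) (hM : 0 < M) {i : ℕ}
    (hi : i ≤ 3 * M) : 1 ≤ δ * deviationFactor A δ M i := by
  rw [deviationFactor, mul_div_cancel₀ _ hδ.ne']
  exact Real.one_le_exp (mul_nonneg hA (sub_nonneg.2 ((div_le_iff₀ hM).2 hi)))

theorem deviationFactor_le {A δ M : ℝ} (hA : 0 ≤ A) (hδ : 0 ≤ δ) (hM : 0 ≤ M) (i : ℕ) :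
    deviationFactor A δ M i ≤ Real.exp (3 * A) / δ := by
  rw [deviationFactor, mul_comm A]
  gcongr
  exact sub_le_self _ (by positivity)

theorem deviationFactor_succ_mul_le (A : ℝ) {δ : ℝ} (hδ : 0 ≤ δ) (M : ℝ) (i : ℕ) :
    deviationFactor A δ M (i + 1) * (1 + A / M) ≤ deviationFactor A δ M i := by
  rw [deviationFactor, div_mul_eq_mul_div]
  refine div_le_div_of_nonneg_right ?_ hδ
  calc Real.exp (A * (3 - (i + 1 : ℕ) / M)) * (1 + A / M) ≤
        Real.exp (A * (3 - (i + 1 : ℕ) / M)) * Real.exp (A / M) := by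
        gcongr
        linarith [Real.add_one_le_exp (A / M)]
    _ = Real.exp (A * (3 - i / M)) := by
        rw [← Real.exp_add]
        push_cast
        ring_nf

theorem deviation_eq_zero (hdeg : ∀ x ∈ U, setDegree w {x} = 1) : deviation U w = 0 :=
  sum_eq_zero fun x hx => by rw [hdeg x hx, sub_self, zero_pow two_ne_zero]

theorem card_le_of_setDegree_eq_one (hw : ∀ K, 0 ≤ w K) (hm : ∀ K, w K ≠ 0 → #K ≤ m)
    (hdeg : ∀ x ∈ U, setDegree w {x} = 1) : #U ≤ m * totalWeight w := by
  simpa [sum_congr rfl hdeg] using sum_setDegree_singleton_le hw hm U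

theorem HasDegreeBounds.exists_residual_of_constants (h : HasDegreeBounds w m 1 κ)
    (hU : ∀ K, w K ≠ 0 → K ⊆ U) (hdeg : ∀ x ∈ U, setDegree w {x} = 1) {δ η κ' Λ : ℝ}
    (hδ0 : 0 < δ) (hδ : δ ≤ 1 / 3) (hδM : 1 ≤ δ * totalWeight w) (hη : 0 < η)
    (hB : Real.exp (3 * (m / δ)) ≤ B)
    (hΛ : Real.exp (3 * ((2 * m * B + 1 / η) / δ)) / δ ≤ Λ) (hκ0 : 0 ≤ κ) (hκκ' : B * κ ≤ κ')
    (hmκ : m * B * κ' ≤ 1) (hκW : 1 ≤ κ' * (δ * totalWeight w))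
    (hδ' : η * (m / δ) + m ^ 2 * κ' + 10 * Λ * m ^ 2 * B ^ 3 * κ' * (m / δ) ≤ δ) :
    ∃ C c v, IsResidual w C c v ∧ #C ≤ (1 + 2 * δ) * totalWeight w ∧
      totalWeight v ≤ δ * totalWeight w ∧
      deviation (U \ C.biUnion id) v ≤ δ * totalWeight w := by
  set M := totalWeight w
  have hδM0 : 0 < δ * M := by linarith
  have hM0 : 0 < M := pos_of_mul_pos_right hδM0 hδ0.le
  have hM1 : 1 ≤ M := by nlinarith
  have hB1 : 1 ≤ B := (Real.one_le_exp (by positivity)).trans hB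
  have hκ'0 : 0 ≤ κ' := le_trans (by positivity) hκκ'
  set A := (2 * m * B + 1 / η) / δ with hA
  have hA0 : 0 ≤ A := by positivity
  refine exists_residual_of_step (q := 1 + m / (δ * M)) (lam := deviationFactor A δ M) h.nonneg
    (deviation_eq_zero hdeg) hM1 hδ0 (by linarith)
    (fun i hi => one_le_mul_deviationFactor hA0 hδ0 hM0 hi) fun i hi C v hr hv => ?_
  have hc : (1 + m / (δ * M)) ^ i ≤ B := by
    rw [← div_div]
    refine (one_add_div_pow_le_exp_mul (by positivity) hM0 (hi.trans' ?_)).trans hB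
    simp
  set l := deviationFactor A δ M (i + 1)
  have hδl : 1 ≤ δ * l := one_le_mul_deviationFactor hA0 hδ0 hM0 hi
  have hl1 : 1 ≤ l := by nlinarith
  have hlΛ : l ≤ Λ := (deviationFactor_le hA0 hδ0.le hM0.le (i + 1)).trans hΛ
  have hv_bounds := hr.hasDegreeBounds h (by positivity) hc
    ((mul_le_mul_of_nonneg_right hc hκ0).trans hκκ')
  obtain ⟨K₀, hr', h_le⟩ := hr.exists_insert (R := m / δ) hU hv_bounds hB1 hmκ hδM hv.le hκW hη
    hl1 ((card_le_of_setDegree_eq_one h.nonneg h.card_le hdeg).trans_eq (by field_simp; rfl))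
    (hδ'.trans' (by gcongr))
  refine ⟨K₀, _, by simpa only [pow_succ'] using hr', h_le.trans ?_⟩
  rw [← div_div, ← hA]
  have h_dev := deviation_nonneg (U \ C.biUnion id) v
  gcongr
  exact deviationFactor_succ_mul_le A hδ0.le M i

theorem exists_residual_of_codegree_le (m : ℕ) {δ : ℝ} (hδ0 : 0 < δ) (hδ : δ ≤ 1 / 3) :
    ∃ κ > 0, ∀ {X : Type*} [Fintype X] [DecidableEq X] {w : Finset X → ℝ} {U : Finset X},
      HasDegreeBounds w m 1 κ → (∀ K, w K ≠ 0 → K ⊆ U) → (∀ x ∈ U, setDegree w {x} = 1) →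
      1 ≤ κ * totalWeight w →
      ∃ C c v, IsResidual w C c v ∧ #C ≤ (1 + 2 * δ) * totalWeight w ∧
        totalWeight v ≤ δ * totalWeight w ∧
        deviation (U \ C.biUnion id) v ≤ δ * totalWeight w := by
  set B := Real.exp (3 * (m / δ))
  set η := δ ^ 2 / (2 * (m + 1)) with hη
  set Λ := Real.exp (3 * ((2 * m * B + 1 / η) / δ)) / δ
  set P := m ^ 2 + 10 * Λ * m ^ 2 * B ^ 3 * (m / δ)
  have hη0 : 0 < η := by positivity
  have hB1 : 1 ≤ B := Real.one_le_exp (by positivity)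
  have hP : 0 ≤ P := by positivity
  obtain ⟨κ', hκ'0, hκ'⟩ := exists_pos_mul_lt (half_pos hδ0) (1 + m * B + P)
  have hmκ : 0 ≤ m * B * κ' := by positivity
  have hPκ : 0 ≤ P * κ' := mul_nonneg hP hκ'0.le
  have h_error : η * (m / δ) + m ^ 2 * κ' + 10 * Λ * m ^ 2 * B ^ 3 * κ' * (m / δ) ≤ δ := by
    have hηδ : η * (m / δ) ≤ δ / 2 := by
      rw [hη]
      field_simp
      linarith
    calc _ = η * (m / δ) + P * κ' := by ring
      _ ≤ δ := by linarith
  refine ⟨κ' * δ / B, by positivity, fun {X _ _ w U} h hU hdeg hW => ?_⟩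
  have hW0 : 0 ≤ totalWeight w := totalWeight_nonneg h.nonneg
  refine h.exists_residual_of_constants hU hdeg hδ0 hδ ?_ hη0 le_rfl le_rfl (by positivity) ?_
    (by linarith) ?_ h_error
  · refine hW.trans (mul_le_mul_of_nonneg_right ?_ hW0)
    rw [div_le_iff₀ (by positivity)]
    nlinarith
  · rw [mul_div_cancel₀ _ (by positivity)]
    nlinarith
  · rw [← mul_assoc]
    refine hW.trans (mul_le_mul_of_nonneg_right ?_ hW0)
    exact div_le_self (by positivity) hB1

theorem card_le_totalWeight_add_deviation (hw : ∀ K, 0 ≤ w K) (hm : ∀ K, w K ≠ 0 → #K ≤ m)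
    (U : Finset X) : #U ≤ 2 * m * totalWeight w + 4 * deviation U w := by
  calc (#U : ℝ) = ∑ x ∈ U, 1 := by simp
    _ ≤ ∑ x ∈ U, (2 * setDegree w {x} + 4 * (setDegree w {x} - 1) ^ 2) :=
        sum_le_sum fun x _ => by nlinarith [sq_nonneg (4 * setDegree w {x} - 3)]
    _ = 2 * ∑ x ∈ U, setDegree w {x} + 4 * deviation U w := by
        rw [sum_add_distrib, ← mul_sum, ← mul_sum, deviation]
    _ ≤ 2 * m * totalWeight w + 4 * deviation U w := by
        linarith [sum_setDegree_singleton_le hw hm U]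

theorem exists_cover_of_codegree_le (m : ℕ) {ε : ℝ} (hε : 0 < ε) :
    ∃ κ > 0, ∀ {X : Type*} [Fintype X] [DecidableEq X] {w : Finset X → ℝ} {U : Finset X},
      HasDegreeBounds w m 1 κ → (∀ K, w K ≠ 0 → K ⊆ U) → (∀ x ∈ U, setDegree w {x} = 1) →
      1 ≤ κ * totalWeight w →
      ∃ C : Finset (Finset X), (∀ K ∈ C, w K ≠ 0) ∧
        #C + #(U \ C.biUnion id) ≤ (1 + ε) * totalWeight w := by
  obtain ⟨δ, hδ0, hδε⟩ := exists_pos_mul_lt (lt_min hε zero_lt_one) (2 * m + 6 : ℝ)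
  rw [lt_min_iff] at hδε
  obtain ⟨κ, hκ, h_nibble⟩ := exists_residual_of_codegree_le m hδ0 (by nlinarith)
  refine ⟨κ, hκ, fun {X _ _ w U} h hU hdeg hW => ?_⟩
  obtain ⟨C, c, v, hr, hC, hv, h_dev⟩ := h_nibble h hU hdeg hW
  refine ⟨C, hr.family, ?_⟩
  have h_left := card_le_totalWeight_add_deviation hr.nonneg
    (fun K hK => h.card_le K (hr.ne_zero hK)) (U \ C.biUnion id)
  calc _ ≤ (1 + 2 * δ) * totalWeight w +
        (2 * m * (δ * totalWeight w) + 4 * (δ * totalWeight w)) := by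
        refine add_le_add hC (h_left.trans ?_)
        gcongr
    _ = (1 + (2 * m + 6) * δ) * totalWeight w := by ring
    _ ≤ (1 + ε) * totalWeight w := by
        gcongr
        exacts [totalWeight_nonneg h.nonneg, hδε.1.le]

end Nibble

section Pushforward

theorem map_nonneg_of_nonneg {α β : Type*} [Finite α] [Finite β] {w : α → ℝ} (hw : ∀ a, 0 ≤ w a)
    (g : α → β) (b : β) : 0 ≤ FunOnFinite.map g w b := by
  have := Fintype.ofFinite α
  rw [FunOnFinite.map_apply_apply]
  exact sum_nonneg fun a _ => hw a

theorem exists_eq_of_map_ne_zero {α β : Type*} [Finite α] [Finite β] {w : α → ℝ} {g : α → β}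
    {b : β} (h : FunOnFinite.map g w b ≠ 0) : ∃ a, w a ≠ 0 ∧ g a = b := by
  have := Fintype.ofFinite α
  rw [FunOnFinite.map_apply_apply] at h
  obtain ⟨a, ha, hwa⟩ := exists_ne_zero_of_sum_ne_zero h
  exact ⟨a, hwa, (mem_filter.1 ha).2⟩

variable {X Y : Type*} [Fintype X] [Fintype Y] {w : Finset X → ℝ}

theorem setDegree_map [DecidableEq Y] (g : Finset X → Finset Y) (S : Finset Y) :
    setDegree (FunOnFinite.map g w) S = ∑ K with S ⊆ g K, w K := by
  calc setDegree (FunOnFinite.map g w) S = ∑ L with S ⊆ L, ∑ K with g K = L, w K := by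
        simp only [setDegree, FunOnFinite.map_apply_apply]
    _ = ∑ K with S ⊆ g K, ∑ _ ∈ {g K}, w K := sum_comm' fun _ _ => by
        simp only [mem_filter_univ, mem_singleton]
        grind
    _ = ∑ K with S ⊆ g K, w K := sum_congr rfl fun K _ => sum_singleton _ _

theorem totalWeight_map (g : Finset X → Finset Y) :
    totalWeight (FunOnFinite.map g w) = totalWeight w := by
  rw [← setDegree_empty, setDegree_map]
  simp [totalWeight]

end Pushforward

section Thinning

variable {X : Type*} [Fintype X] [DecidableEq X] {w : Finset X → ℝ} {p : ℝ}

/-- The weighted hypergraph obtained from `w` by removing the vertex `x` from a proportion `1 - p`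
of each hyperedge, which multiplies the degree of `x` by `p` and preserves all other degrees. -/
noncomputable def thin (w : Finset X → ℝ) (x : X) (p : ℝ) : Finset X → ℝ :=
  p • w + (1 - p) • FunOnFinite.map (fun K => K.erase x) w

theorem thin_nonneg (hw : ∀ K, 0 ≤ w K) (hp0 : 0 ≤ p) (hp1 : p ≤ 1) (x : X) (K : Finset X) :
    0 ≤ thin w x p K :=
  add_nonneg (mul_nonneg hp0 (hw K))
    (mul_nonneg (sub_nonneg.2 hp1) (map_nonneg_of_nonneg hw _ K))

theorem exists_superset_of_thin_ne_zero {x : X} {K : Finset X} (h : thin w x p K ≠ 0) :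
    ∃ L, w L ≠ 0 ∧ K ⊆ L := by
  by_cases hK : w K = 0
  · have h_map : FunOnFinite.map (fun K => K.erase x) w K ≠ 0 :=
      fun h0 => h (by simp [thin, hK, h0])
    obtain ⟨L, hL, rfl⟩ := exists_eq_of_map_ne_zero h_map
    exact ⟨L, hL, erase_subset x L⟩
  · exact ⟨K, hK, Subset.rfl⟩

theorem setDegree_thin (x : X) (p : ℝ) (S : Finset X) :
    setDegree (thin w x p) S = if x ∈ S then p * setDegree w S else setDegree w S := by
  simp only [thin, setDegree_add, setDegree_smul, setDegree_map, subset_erase]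
  split_ifs with hx
  · simp [hx]
  · simp only [hx, not_false_eq_true, and_true, setDegree]
    ring

theorem codegree_thin_le (hw : ∀ K, 0 ≤ w K) (hp1 : p ≤ 1) (x y z : X) :
    codegree (thin w x p) y z ≤ codegree w y z := by
  rw [codegree, codegree, setDegree_thin]
  split_ifs
  exacts [le_rfl, mul_le_of_le_one_left (setDegree_nonneg hw _) hp1, le_rfl]

theorem totalWeight_thin (x : X) (p : ℝ) : totalWeight (thin w x p) = totalWeight w := by
  rw [← setDegree_empty, setDegree_thin, if_neg (notMem_empty x), setDegree_empty]

theorem exists_setDegree_singleton_eq_one (hw : ∀ K, 0 ≤ w K) (U : Finset X)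
    (hU : ∀ x ∈ U, 1 ≤ setDegree w {x}) :
    ∃ v : Finset X → ℝ, (∀ K, 0 ≤ v K) ∧ (∀ K, v K ≠ 0 → ∃ L, w L ≠ 0 ∧ K ⊆ L) ∧
      (∀ x y, codegree v x y ≤ codegree w x y) ∧ totalWeight v = totalWeight w ∧
      ∀ x, setDegree v {x} = if x ∈ U then 1 else setDegree w {x} := by
  induction U using Finset.induction_on with
  | empty => exact ⟨w, hw, fun K hK => ⟨K, hK, Subset.rfl⟩, fun _ _ => le_rfl, rfl, by simp⟩
  | insert a S ha ih =>
    obtain ⟨v, hv0, hv_sub, hv_codeg, hvW, hv_deg⟩ := ih fun x hx => hU x (mem_insert_of_mem hx)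
    have hva : setDegree v {a} = setDegree w {a} := by rw [hv_deg, if_neg ha]
    have hd : 1 ≤ setDegree v {a} := hva ▸ hU a (mem_insert_self a S)
    have hp1 : (setDegree v {a})⁻¹ ≤ 1 := inv_le_one_of_one_le₀ hd
    refine ⟨thin v a (setDegree v {a})⁻¹, thin_nonneg hv0 (by positivity) hp1 a, fun K hK => ?_,
      fun x y => (codegree_thin_le hv0 hp1 a x y).trans (hv_codeg x y),
      by rw [totalWeight_thin, hvW], fun x => ?_⟩
    · obtain ⟨L, hL, hKL⟩ := exists_superset_of_thin_ne_zero hK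
      obtain ⟨M, hM, hLM⟩ := hv_sub L hL
      exact ⟨M, hM, hKL.trans hLM⟩
    · rw [setDegree_thin]
      rcases eq_or_ne a x with rfl | hax
      · simp [inv_mul_cancel₀ (zero_lt_one.trans_le hd).ne']
      · simp [hax, hax.symm, hv_deg]

theorem exists_cover_of_one_le_setDegree (m : ℕ) {ε : ℝ} (hε : 0 < ε) :
    ∃ κ > 0, ∀ {X : Type*} [Fintype X] [DecidableEq X] {w : Finset X → ℝ} {U : Finset X},
      (∀ K, 0 ≤ w K) → (∀ K, w K ≠ 0 → #K ≤ m) → (∀ K, w K ≠ 0 → K ⊆ U) →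
      (∀ x y, codegree w x y ≤ κ) → (∀ x ∈ U, 1 ≤ setDegree w {x}) → 1 ≤ κ * totalWeight w →
      ∃ C : Finset (Finset X), (∀ K ∈ C, ∃ L, w L ≠ 0 ∧ K ⊆ L) ∧
        #C + #(U \ C.biUnion id) ≤ (1 + ε) * totalWeight w := by
  obtain ⟨κ, hκ, h_cover⟩ := exists_cover_of_codegree_le m hε
  refine ⟨κ, hκ, fun {X _ _ w U} hw hm hU h_codeg hdeg hW => ?_⟩
  obtain ⟨v, hv0, hv_sub, hv_codeg, hvW, hv_deg⟩ := exists_setDegree_singleton_eq_one hw U hdeg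
  have hvU : ∀ K, v K ≠ 0 → K ⊆ U := fun K hK =>
    let ⟨L, hL, hKL⟩ := hv_sub K hK
    hKL.trans (hU L hL)
  have hv : HasDegreeBounds v m 1 κ :=
    { nonneg := hv0
      card_le := fun K hK =>
        let ⟨L, hL, hKL⟩ := hv_sub K hK
        (card_le_card hKL).trans (hm L hL)
      degree_le := fun x => by
        by_cases hx : x ∈ U
        · rw [hv_deg, if_pos hx]
        · rw [setDegree_eq_zero hvU (by simpa using hx)]
          exact zero_le_one
      codegree_le := fun x y => (hv_codeg x y).trans (h_codeg x y) }
  obtain ⟨C, hC, h_card⟩ :=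
    h_cover hv hvU (fun x hx => by rw [hv_deg, if_pos hx]) (hvW.symm ▸ hW)
  exact ⟨C, fun K hK => hv_sub K (hC K hK), hvW ▸ h_card⟩

end Thinning

section GreedyRatio

/-- A lower bound for the ratio between the probability that `k` steps of the random greedy clique
process capture a given clique of size `t`, and the same probability in a complete `t`-partite
graph in the limit `k → ∞`. -/
noncomputable def greedyRatio : ℕ → ℕ → ℝ
  | _, 0 => 1
  | 0, _ + 1 => 0
  | k + 1, t + 1 => greedyRatio k (t + 1) +
      ((t : ℝ) / (t + 1)) ^ t * (greedyRatio k t - greedyRatio k (t + 1))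

theorem greedyRatio_zero_right (k : ℕ) : greedyRatio k 0 = 1 := by cases k <;> rfl

theorem natCast_div_add_one_pow_pos (t : ℕ) : 0 < ((t : ℝ) / (t + 1)) ^ t := by
  rcases Nat.eq_zero_or_pos t with rfl | h
  · simp
  · positivity

theorem natCast_div_add_one_pow_le_one (t : ℕ) : ((t : ℝ) / (t + 1)) ^ t ≤ 1 :=
  pow_le_one₀ (by positivity) (div_le_one_of_le₀ (by linarith) (by positivity))

theorem greedyRatio_succ_right_le (k t : ℕ) : greedyRatio k (t + 1) ≤ greedyRatio k t := by
  induction k generalizing t with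
  | zero => cases t <;> simp [greedyRatio]
  | succ k ih =>
    have h_left : greedyRatio (k + 1) (t + 1) ≤ greedyRatio k t := by
      rw [greedyRatio]
      nlinarith [ih t, natCast_div_add_one_pow_le_one t]
    refine h_left.trans ?_
    cases t with
    | zero => simp [greedyRatio_zero_right]
    | succ t =>
      rw [greedyRatio]
      nlinarith [ih t, natCast_div_add_one_pow_pos t]

theorem greedyRatio_le_succ_left (k t : ℕ) : greedyRatio k t ≤ greedyRatio (k + 1) t := by
  cases t with
  | zero => simp [greedyRatio_zero_right]
  | succ t =>
    rw [greedyRatio]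
    nlinarith [greedyRatio_succ_right_le k t, natCast_div_add_one_pow_pos t]

theorem greedyRatio_le_one (k t : ℕ) : greedyRatio k t ≤ 1 := by
  induction t with
  | zero => simp [greedyRatio_zero_right]
  | succ t ih => exact (greedyRatio_succ_right_le k t).trans ih

theorem greedyRatio_nonneg (k t : ℕ) : 0 ≤ greedyRatio k t := by
  induction k with
  | zero => cases t <;> simp [greedyRatio]
  | succ k ih => exact ih.trans (greedyRatio_le_succ_left k t)

theorem tendsto_greedyRatio (t : ℕ) :
    Filter.Tendsto (fun k => greedyRatio k t) Filter.atTop (nhds 1) := by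
  induction t with
  | zero => simp [greedyRatio_zero_right]
  | succ t ih =>
    have h_mono : Monotone fun k => greedyRatio k (t + 1) :=
      monotone_nat_of_le_succ fun k => greedyRatio_le_succ_left k (t + 1)
    obtain ⟨L, hL⟩ : ∃ L, Filter.Tendsto (fun k => greedyRatio k (t + 1)) Filter.atTop (nhds L) :=
      ⟨_, tendsto_atTop_ciSup h_mono ⟨1, by rintro _ ⟨k, rfl⟩; exact greedyRatio_le_one _ _⟩⟩
    have h_fixed : L = L + ((t : ℝ) / (t + 1)) ^ t * (1 - L) :=
      tendsto_nhds_unique (hL.comp (Filter.tendsto_add_atTop_nat 1))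
        (hL.add ((ih.sub hL).const_mul _))
    have hL1 : 1 - L = 0 := (mul_eq_zero.1 (left_eq_add.1 h_fixed)).resolve_left
      (natCast_div_add_one_pow_pos t).ne'
    rwa [← sub_eq_zero.1 hL1] at hL

/-- The lower bound established for the probability that `k` steps of the random greedy clique
process, started on `x` vertices (including idle ones), capture a given clique of size `t`. -/
noncomputable def greedyBound (k t : ℕ) (x : ℝ) : ℝ := greedyRatio k t * (t / x) ^ t

theorem greedyBound_anti (k t : ℕ) {x y : ℝ} (hx : 0 < x) (hxy : x ≤ y) :
    greedyBound k t y ≤ greedyBound k t x := by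
  have := greedyRatio_nonneg k t
  have := hx.trans_le hxy
  rw [greedyBound, greedyBound]
  gcongr

theorem add_one_le_div_pow_add (s : ℕ) {u : ℝ} (hu : 0 < u) : (s : ℝ) + 1 ≤ (s / u) ^ s + u := by
  have h_bernoulli := one_add_mul_le_pow (a := (s : ℝ) / u - 1)
    (by linarith [show 0 ≤ (s : ℝ) / u by positivity]) s
  have h_sq : 1 + s * (s / u - 1) + u - (s + 1 : ℝ) = (u - s) ^ 2 / u := by
    field_simp
    ring
  have h_nonneg : 0 ≤ (u - s) ^ 2 / u := by positivity
  rw [add_sub_cancel] at h_bernoulli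
  linarith

theorem mul_div_pow_le_div_pow_add (s : ℕ) {m M : ℝ} (hm : 0 < m) (hM : 0 < M) :
    M * ((s + 1) / M) ^ (s + 1) ≤ (s / m) ^ s + m * ((s + 1) / M) ^ (s + 1) := by
  set τ := ((s : ℝ) + 1) / M with hτ
  have hτ0 : 0 < τ := by positivity
  calc M * τ ^ (s + 1) = (s + 1) * τ ^ s := by
        rw [pow_succ, hτ]
        field_simp
    _ ≤ ((s / (m * τ)) ^ s + m * τ) * τ ^ s := by
        exact mul_le_mul_of_nonneg_right (add_one_le_div_pow_add s (mul_pos hm hτ0))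
          (by positivity)
    _ = (s / m) ^ s + m * τ ^ (s + 1) := by
        rw [add_mul, ← mul_pow]
        congr 1
        · field_simp
        · ring

theorem mul_div_pow_le_sum_div_pow_add {ι : Type*} {T : Finset ι} {s : ℕ} (hT : #T = s + 1)
    {m : ι → ℝ} {M : ℝ} (hm : ∀ v ∈ T, 0 < m v) (hM : 0 < M) :
    M * ((s + 1) / M) ^ (s + 1) ≤
      ∑ v ∈ T, (s / m v) ^ s + (∑ v ∈ T, m v - s * M) * ((s + 1) / M) ^ (s + 1) := by
  have h_sum := sum_le_sum fun v (hv : v ∈ T) => mul_div_pow_le_div_pow_add s (hm v hv) hM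
  rw [sum_const, hT, sum_add_distrib, ← sum_mul, nsmul_eq_mul] at h_sum
  push_cast at h_sum
  linarith

theorem div_add_one_pow_mul_le_sum_div_pow {ι : Type*} {T : Finset ι} {s : ℕ} (hT : #T = s + 1)
    {m : ι → ℝ} {M : ℝ} (hm : ∀ v ∈ T, 0 < m v) (hmM : ∀ v ∈ T, m v ≤ M) (hM : 0 < M) :
    ((s : ℝ) / (s + 1)) ^ s * (M * ((s + 1) / M) ^ (s + 1)) ≤ ∑ v ∈ T, (s / m v) ^ s := by
  calc ((s : ℝ) / (s + 1)) ^ s * (M * ((s + 1) / M) ^ (s + 1)) = ∑ _v ∈ T, ((s : ℝ) / M) ^ s := by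
        rw [sum_const, hT, nsmul_eq_mul, pow_succ, div_pow, div_pow, div_pow]
        push_cast
        field_simp
    _ ≤ ∑ v ∈ T, (s / m v) ^ s := by
        gcongr with v hv
        exacts [hm v hv, hmM v hv]

theorem greedyBound_succ_mul_le {ι : Type*} {T : Finset ι} {k s : ℕ} (hT : #T = s + 1)
    {m : ι → ℝ} {M c : ℝ} (hm : ∀ v ∈ T, 0 < m v) (hmM : ∀ v ∈ T, m v ≤ M) (hM : 0 < M)
    (hc : ∑ v ∈ T, m v - s * M ≤ c) :
    greedyBound (k + 1) (s + 1) M * M ≤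
      ∑ v ∈ T, greedyBound k s (m v) + c * greedyBound k (s + 1) M := by
  simp only [greedyBound, greedyRatio, ← mul_sum, Nat.cast_succ]
  have h_avg := mul_le_mul_of_nonneg_left
    ((mul_div_pow_le_sum_div_pow_add hT hm hM).trans
      (add_le_add_right (mul_le_mul_of_nonneg_right hc (by positivity)) _))
    (greedyRatio_nonneg k (s + 1))
  have h_max := mul_le_mul_of_nonneg_left (div_add_one_pow_mul_le_sum_div_pow hT hm hmM hM)
    (sub_nonneg.2 (greedyRatio_succ_right_le k s))
  linarith

end GreedyRatio

section GreedyClique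

variable {V : Type*} [Fintype V] [DecidableEq V] (G : SimpleGraph V) {D : ℝ}

/-- The law of a random clique inside `H`, built in at most `k` rounds. In each round, `H` is
extended by `D` idle elements and one of the `#H + D` elements is drawn uniformly. An idle element
leaves `H` unchanged; a vertex joins the clique and restricts `H` to its neighbours. -/
noncomputable def greedyLaw (D : ℝ) : ℕ → Finset V → Finset V → ℝ
  | 0, _ => Pi.single ∅ 1
  | k + 1, H => (#H + D)⁻¹ •
      (∑ v ∈ H, FunOnFinite.map (insert v) (greedyLaw D k {u ∈ H | G.Adj v u}) +
        D • greedyLaw D k H)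

theorem greedyLaw_nonneg (hD : 0 ≤ D) (k : ℕ) (H K : Finset V) : 0 ≤ greedyLaw G D k H K := by
  induction k generalizing H K with
  | zero =>
    rw [greedyLaw, Pi.single_apply]
    split_ifs
    exacts [zero_le_one, le_rfl]
  | succ k ih =>
    simp only [greedyLaw, Pi.smul_apply, Pi.add_apply, Finset.sum_apply, smul_eq_mul]
    have h_sum := sum_nonneg fun v (_ : v ∈ H) =>
      map_nonneg_of_nonneg (ih {u ∈ H | G.Adj v u}) (insert v) K
    exact mul_nonneg (by positivity) (add_nonneg h_sum (mul_nonneg hD (ih H K)))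

theorem of_greedyLaw_succ_ne_zero {k : ℕ} {H K : Finset V} (h : greedyLaw G D (k + 1) H K ≠ 0) :
    (∃ v ∈ H, ∃ L, greedyLaw G D k {u ∈ H | G.Adj v u} L ≠ 0 ∧ insert v L = K) ∨
      greedyLaw G D k H K ≠ 0 := by
  by_contra! h_zero
  have h_map : ∀ v ∈ H, FunOnFinite.map (insert v) (greedyLaw G D k {u ∈ H | G.Adj v u}) K = 0 :=
    fun v hv => by_contra fun h0 =>
      let ⟨L, hL, hLK⟩ := exists_eq_of_map_ne_zero h0
      h_zero.1 v hv L hL hLK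
  exact h (by simp [greedyLaw, Finset.sum_apply, h_zero.2, sum_eq_zero h_map])

theorem isClique_of_greedyLaw_ne_zero {k : ℕ} {H K : Finset V} (h : greedyLaw G D k H K ≠ 0) :
    K ⊆ H ∧ G.IsClique (K : Set V) ∧ #K ≤ k := by
  induction k generalizing H K with
  | zero =>
    obtain rfl : K = ∅ := by_contra fun h0 => h (Pi.single_eq_of_ne h0 _)
    simp
  | succ k ih =>
    rcases of_greedyLaw_succ_ne_zero G h with ⟨v, hv, L, hL, rfl⟩ | hK
    · obtain ⟨hLH, hL_clique, hL_card⟩ := ih hL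
      refine ⟨insert_subset hv (hLH.trans (filter_subset _ _)), ?_,
        (card_insert_le _ _).trans (Nat.succ_le_succ hL_card)⟩
      rw [coe_insert]
      exact hL_clique.insert fun b hb _ => (mem_filter.1 (hLH hb)).2
    · obtain ⟨hKH, hK_clique, hK_card⟩ := ih hK
      exact ⟨hKH, hK_clique, hK_card.trans k.le_succ⟩

theorem setDegree_greedyLaw_succ (k : ℕ) (H S : Finset V) :
    setDegree (greedyLaw G D (k + 1) H) S =
      (∑ v ∈ H, setDegree (greedyLaw G D k {u ∈ H | G.Adj v u}) (S.erase v) +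
        D * setDegree (greedyLaw G D k H) S) / (#H + D) := by
  rw [greedyLaw, setDegree_smul, setDegree_add, setDegree_sum, setDegree_smul, div_eq_inv_mul]
  simp only [setDegree_map, subset_insert_iff]
  rfl

theorem totalWeight_greedyLaw (hD : 0 < D) (k : ℕ) (H : Finset V) :
    totalWeight (greedyLaw G D k H) = 1 := by
  induction k generalizing H with
  | zero => simp [totalWeight, greedyLaw]
  | succ k ih =>
    rw [← setDegree_empty, setDegree_greedyLaw_succ]
    simp only [erase_empty, setDegree_empty, ih, sum_const, nsmul_eq_mul, mul_one]
    exact div_self (by positivity)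

theorem sum_card_filter_adj_le {s : ℕ} {T : Finset V} (hT : #T = s + 1) (H : Finset V) :
    ∑ v ∈ T, #{u ∈ H | G.Adj v u} ≤ #{u ∈ H | ∀ v ∈ T, G.Adj v u} + s * #H := by
  simp only [card_filter]
  rw [sum_comm, mul_comm, ← smul_eq_mul, ← sum_const, ← sum_add_distrib]
  refine sum_le_sum fun u _ => ?_
  rw [← card_filter]
  split_ifs with h
  · exact (card_filter_le _ _).trans (by omega)
  · have h_lt : #{v ∈ T | G.Adj v u} < #T := by
      push Not at h
      exact card_lt_card (filter_ssubset.2 h)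
    omega

theorem sum_greedyBound_add_le_sum_setDegree (hD : 0 < D) {k s : ℕ} {H T : Finset V}
    (hT : #T = s + 1) (hTH : T ⊆ H) (h_clique : G.IsClique (T : Set V))
    (ih : ∀ H' T' : Finset V, T' ⊆ H' → G.IsClique (T' : Set V) →
      greedyBound k #T' (#H' + D) ≤ setDegree (greedyLaw G D k H') T') :
    ∑ v ∈ T, greedyBound k s (#{u ∈ H | G.Adj v u} + D) +
        #{u ∈ H | ∀ v ∈ T, G.Adj v u} * greedyBound k (s + 1) (#H + D) ≤
      ∑ v ∈ H, setDegree (greedyLaw G D k {u ∈ H | G.Adj v u}) (T.erase v) := by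
  set C := {u ∈ H | ∀ v ∈ T, G.Adj v u}
  have h_disj : Disjoint T C := disjoint_left.2 fun v hvT hvC =>
    G.irrefl ((mem_filter.1 hvC).2 v hvT)
  have h_mem : ∀ v ∈ T, greedyBound k s (#{u ∈ H | G.Adj v u} + D) ≤
      setDegree (greedyLaw G D k {u ∈ H | G.Adj v u}) (T.erase v) := fun v hv => by
    have h_erase : T.erase v ⊆ {u ∈ H | G.Adj v u} := fun u hu => mem_filter.2
      ⟨hTH (mem_of_mem_erase hu), h_clique hv (mem_of_mem_erase hu) (ne_of_mem_erase hu).symm⟩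
    simpa [card_erase_of_mem hv, hT] using
      ih _ (T.erase v) h_erase (h_clique.subset (erase_subset v T))
  have h_common : ∀ v ∈ C, greedyBound k (s + 1) (#H + D) ≤
      setDegree (greedyLaw G D k {u ∈ H | G.Adj v u}) (T.erase v) := fun v hv => by
    have hT_sub : T ⊆ {u ∈ H | G.Adj v u} := fun u hu =>
      mem_filter.2 ⟨hTH hu, ((mem_filter.1 hv).2 u hu).symm⟩
    rw [erase_eq_of_notMem fun h => disjoint_left.1 h_disj h hv]
    refine (greedyBound_anti k (s + 1) (by positivity) ?_).trans (hT ▸ ih _ T hT_sub h_clique)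
    gcongr
    exact filter_subset _ _
  calc _ ≤ ∑ v ∈ T, setDegree (greedyLaw G D k {u ∈ H | G.Adj v u}) (T.erase v) +
        ∑ v ∈ C, setDegree (greedyLaw G D k {u ∈ H | G.Adj v u}) (T.erase v) :=
        add_le_add (sum_le_sum h_mem) (by simpa using card_nsmul_le_sum C _ _ h_common)
    _ = ∑ v ∈ T ∪ C, setDegree (greedyLaw G D k {u ∈ H | G.Adj v u}) (T.erase v) :=
        (sum_union h_disj).symm
    _ ≤ _ := sum_le_sum_of_subset_of_nonneg (union_subset hTH (filter_subset _ _))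
        fun v _ _ => setDegree_nonneg (greedyLaw_nonneg G hD.le k _) _

theorem eq_empty_or_exists_card_eq_add_one {α : Type*} (T : Finset α) :
    T = ∅ ∨ ∃ s, #T = s + 1 :=
  T.eq_empty_or_nonempty.imp_right fun h => Nat.exists_eq_add_one.2 h.card_pos

theorem greedyBound_le_setDegree (hD : 0 < D) (k : ℕ) {H T : Finset V} (hTH : T ⊆ H)
    (h_clique : G.IsClique (T : Set V)) :
    greedyBound k #T (#H + D) ≤ setDegree (greedyLaw G D k H) T := by
  induction k generalizing H T with
  | zero =>
    obtain rfl | ⟨s, hs⟩ := eq_empty_or_exists_card_eq_add_one T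
    · simp [greedyBound, greedyRatio_zero_right, setDegree_empty, totalWeight_greedyLaw G hD]
    · simpa [hs, greedyBound, greedyRatio] using setDegree_nonneg (greedyLaw_nonneg G hD.le 0 H) T
  | succ k ih =>
    obtain rfl | ⟨s, hs⟩ := eq_empty_or_exists_card_eq_add_one T
    · simp [greedyBound, greedyRatio_zero_right, setDegree_empty, totalWeight_greedyLaw G hD]
    have h_count : ∑ v ∈ T, ((#{u ∈ H | G.Adj v u} : ℝ) + D) - s * (#H + D) ≤
        #{u ∈ H | ∀ v ∈ T, G.Adj v u} + D := by
      have h_card : ∑ v ∈ T, (#{u ∈ H | G.Adj v u} : ℝ) ≤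
          #{u ∈ H | ∀ v ∈ T, G.Adj v u} + s * #H := mod_cast sum_card_filter_adj_le G hs H
      rw [sum_add_distrib, sum_const, hs, nsmul_eq_mul]
      push_cast
      linarith
    have h_bound := greedyBound_succ_mul_le (k := k) hs (fun v _ => by positivity)
      (fun v _ => by gcongr; exact filter_subset _ _) (by positivity) h_count
    have h_sum := sum_greedyBound_add_le_sum_setDegree G hD hs hTH h_clique fun H' T' => ih
    have h_idle := mul_le_mul_of_nonneg_left (hs ▸ ih hTH h_clique) hD.le
    rw [setDegree_greedyLaw_succ, le_div_iff₀ (by positivity), hs]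
    linarith

theorem mul_pow_add_mul_pow_le {q D M : ℝ} (hq : 0 ≤ q) (hD : 0 < D) (hM : D ≤ M) (n : ℕ) :
    n * q ^ (n - 1) + M * q ^ n ≤ (q + 1 / D) ^ n * M := by
  have h_expand : q ^ n + n * (q ^ (n - 1) * (1 / D)) ≤ (q + 1 / D) ^ n := by
    simpa [mul_assoc] using pow_add_mul_le_add_pow hq (by positivity : 0 ≤ 2 * q + 1 / D) n
  have hMD : 1 ≤ 1 / D * M := by rwa [one_div, ← div_eq_inv_mul, one_le_div hD]
  have hn : 0 ≤ n * q ^ (n - 1) := by positivity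
  calc n * q ^ (n - 1) + M * q ^ n ≤ n * q ^ (n - 1) * (1 / D * M) + M * q ^ n :=
        add_le_add_left (le_mul_of_one_le_right hn hMD) _
    _ = (q ^ n + n * (q ^ (n - 1) * (1 / D))) * M := by ring
    _ ≤ (q + 1 / D) ^ n * M := by gcongr; linarith

theorem setDegree_greedyLaw_le (hD : 0 < D) (k : ℕ) (H S : Finset V) :
    setDegree (greedyLaw G D k H) S ≤ (k / D) ^ #S := by
  induction k generalizing H S with
  | zero =>
    rcases S.eq_empty_or_nonempty with rfl | hS
    · simp [setDegree_empty, totalWeight_greedyLaw G hD]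
    · rw [setDegree_eq_zero (U := ∅) fun K hK => ?_]
      · positivity
      · simpa using hS.ne_empty
      · exact (card_eq_zero.1 (Nat.le_zero.1 (isClique_of_greedyLaw_ne_zero G hK).2.2)).subset
  | succ k ih =>
    set q : ℝ := k / D
    have h_erase (v : V) : setDegree (greedyLaw G D k {u ∈ H | G.Adj v u}) (S.erase v) ≤
        (if v ∈ S then q ^ (#S - 1) else 0) + q ^ #S := by
      refine (ih _ _).trans ?_
      split_ifs with hv
      · rw [card_erase_of_mem hv]
        exact le_add_of_nonneg_right (by positivity)
      · rw [erase_eq_of_notMem hv, zero_add]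
    have h_card : (#{v ∈ H | v ∈ S} : ℝ) ≤ #S :=
      mod_cast card_le_card fun v hv => (mem_filter.1 hv).2
    rw [setDegree_greedyLaw_succ, div_le_iff₀ (by positivity)]
    calc _ ≤ ∑ v ∈ H, ((if v ∈ S then q ^ (#S - 1) else 0) + q ^ #S) + D * q ^ #S := by
          gcongr with v
          exacts [h_erase v, ih H S]
      _ = #{v ∈ H | v ∈ S} * q ^ (#S - 1) + (#H + D) * q ^ #S := by
          rw [sum_add_distrib, ← sum_filter, sum_const, sum_const, nsmul_eq_mul, nsmul_eq_mul]
          ring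
      _ ≤ #S * q ^ (#S - 1) + (#H + D) * q ^ #S := by gcongr
      _ ≤ (q + 1 / D) ^ #S * (#H + D) :=
          mul_pow_add_mul_pow_le (by positivity) hD (by simp) _
      _ = ((k + 1 : ℕ) / D) ^ #S * (#H + D) := by
          rw [← add_div]
          push_cast
          rfl

end GreedyClique

section CliqueCovers

variable {V : Type} [Fintype V] [DecidableEq V] {t : ℕ} {G : SimpleGraph V}

theorem isIntCover_indicator {C : Finset (Finset V)} (hC : ∀ K ∈ C, IsCliqueOf G K)
    (h_cover : ∀ T, #T = t → G.IsClique (T : Set V) → ∃ K ∈ C, T ⊆ K) :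
    IsIntCover t G fun K => if K ∈ C then 1 else 0 := by
  have h_nonneg (K : Finset V) : (0 : ℝ) ≤ if K ∈ C then 1 else 0 := by split_ifs <;> simp
  refine ⟨⟨h_nonneg, fun K hK => if_neg fun h => hK (hC K h), fun T hT hT_clique => ?_⟩,
    fun K => (ite_eq_or_eq _ _ _).symm⟩
  obtain ⟨K, hK, hTK⟩ := h_cover T hT hT_clique
  calc (1 : ℝ) = if K ∈ C then 1 else 0 := (if_pos hK).symm
    _ ≤ ∑ K with T ⊆ K, if K ∈ C then 1 else 0 :=
        single_le_sum (fun K _ => h_nonneg K) ((mem_filter_univ K).2 hTK)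

theorem thetaInt_le_card {C : Finset (Finset V)} (hC : ∀ K ∈ C, IsCliqueOf G K)
    (h_cover : ∀ T, #T = t → G.IsClique (T : Set V) → ∃ K ∈ C, T ⊆ K) :
    thetaInt t G (fun _ => 1) ≤ #C := by
  refine csInf_le ⟨0, ?_⟩ ⟨_, isIntCover_indicator hC h_cover, by simp [cliqueCost]⟩
  rintro _ ⟨f, hf, rfl⟩
  exact sum_nonneg fun K _ => by simpa using hf.1.1 K

theorem thetaInt_le_card_add_card_sdiff (ht : 0 < t) {C : Finset (Finset (Finset V))}
    (hC : ∀ L ∈ C, ∃ K : Finset V, G.IsClique (K : Set V) ∧ ∀ T ∈ L, T ⊆ K) :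
    thetaInt t G (fun _ => 1) ≤ #C + #(G.cliqueFinset t \ C.biUnion id) := by
  choose! Q hQ hLQ using hC
  set R := {K ∈ C.image Q | K.Nonempty}
  have hR_card : #R ≤ #C := (card_filter_le _ _).trans card_image_le
  have h_card : #(R ∪ (G.cliqueFinset t \ C.biUnion id)) ≤
      #C + #(G.cliqueFinset t \ C.biUnion id) := (card_union_le _ _).trans (by gcongr)
  refine (thetaInt_le_card (fun K hK => ?_) fun T hT hT_clique => ?_).trans (mod_cast h_card)
  · rcases mem_union.1 hK with hKR | hKU
    · obtain ⟨hKQ, hK_nonempty⟩ := mem_filter.1 hKR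
      obtain ⟨L, hL, rfl⟩ := mem_image.1 hKQ
      exact ⟨hK_nonempty, hQ L hL⟩
    · obtain ⟨hK_clique, hK_card⟩ := SimpleGraph.mem_cliqueFinset_iff.1 (mem_sdiff.1 hKU).1
      exact ⟨card_pos.1 (hK_card ▸ ht), hK_clique⟩
  · by_cases hTC : T ∈ C.biUnion id
    · obtain ⟨L, hL, hTL⟩ := mem_biUnion.1 hTC
      have hTQ := hLQ L hL T hTL
      have hQ_nonempty : (Q L).Nonempty := (card_pos.1 (hT ▸ ht)).mono hTQ
      exact ⟨Q L, mem_union_left _ (mem_filter.2 ⟨mem_image_of_mem Q hL, hQ_nonempty⟩), hTQ⟩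
    · have hTU := SimpleGraph.mem_cliqueFinset_iff.2 ⟨hT_clique, hT⟩
      exact ⟨T, mem_union_right _ (mem_sdiff.2 ⟨hTU, hTC⟩), Subset.rfl⟩

theorem one_le_of_isFracCover {f : Finset V → ℝ} (hf : IsFracCover t G f)
    (hG : G.CliqueFree (t + 1)) {T : Finset V} (hT : #T = t) (hT_clique : G.IsClique (T : Set V)) :
    1 ≤ f T := by
  refine (hf.2.2 T hT hT_clique).trans_eq (sum_eq_single T (fun K hK hKT => ?_) (by simp))
  refine hf.2.1 K fun hK_clique => ?_
  have h_lt : #T < #K := card_lt_card (((mem_filter_univ K).1 hK).ssubset_of_ne hKT.symm)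
  exact hG.mono (hT ▸ h_lt) K ⟨hK_clique.2, rfl⟩

theorem card_cliqueFinset_le_thetaInt [DecidableRel G.Adj] (ht : 0 < t)
    (hG : G.CliqueFree (t + 1)) : #(G.cliqueFinset t) ≤ thetaInt t G (fun _ => 1) := by
  have h_cover : IsIntCover t G fun T => if T ∈ G.cliqueFinset t then 1 else 0 :=
    isIntCover_indicator
      (fun T hT =>
        let ⟨hT_clique, hT_card⟩ := SimpleGraph.mem_cliqueFinset_iff.1 hT
        ⟨card_pos.1 (hT_card ▸ ht), hT_clique⟩)
      fun T hT hT_clique =>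
        ⟨T, SimpleGraph.mem_cliqueFinset_iff.2 ⟨hT_clique, hT⟩, Subset.rfl⟩
  refine le_csInf ⟨_, _, h_cover, rfl⟩ ?_
  rintro _ ⟨f, ⟨hf, -⟩, rfl⟩
  have h_one (T) (hT : T ∈ G.cliqueFinset t) : 1 ≤ f T :=
    let ⟨hT_clique, hT_card⟩ := SimpleGraph.mem_cliqueFinset_iff.1 hT
    one_le_of_isFracCover hf hG hT_card hT_clique
  calc (#(G.cliqueFinset t) : ℝ) = ∑ T ∈ G.cliqueFinset t, 1 := by simp
    _ ≤ ∑ T ∈ G.cliqueFinset t, f T := sum_le_sum h_one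
    _ ≤ ∑ K, f K := sum_le_sum_of_subset_of_nonneg (subset_univ _) fun K _ _ => hf.1 K
    _ = cliqueCost (fun _ => 1) f := by simp [cliqueCost]

end CliqueCovers

section TuranGraph

theorem div_le_card_filter_mod_eq {n t i : ℕ} (hi : i < t) :
    n / t ≤ #{v : Fin n | v.val % t = i} := by
  have h_count : #{v : Fin n | v.val % t = i} = n.count (· ≡ i [MOD t]) := by
    rw [Nat.count_eq_card_filter_range, ← Nat.Iio_eq_range, ← Fin.map_valEmbedding_univ,
      filter_map, card_map]
    simp only [Nat.ModEq, Nat.mod_eq_of_lt hi]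
    rfl
  rw [h_count, Nat.count_modEq_card n (Nat.zero_lt_of_lt hi)]
  exact Nat.le_add_right _ _

theorem div_pow_le_card_cliqueFinset_turanGraph (n t : ℕ) :
    (n / t) ^ t ≤ #((SimpleGraph.turanGraph n t).cliqueFinset t) := by
  set P := Fintype.piFinset fun i : Fin t => ({v | v.val % t = i.val} : Finset (Fin n))
  have hP {g : Fin t → Fin n} (hg : g ∈ P) (i : Fin t) : (g i).val % t = i := by
    simpa using Fintype.mem_piFinset.1 hg i
  have h_inj {g : Fin t → Fin n} (hg : g ∈ P) : Function.Injective g := fun i j hij =>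
    Fin.ext (by rw [← hP hg i, ← hP hg j, hij])
  have h_card : (n / t) ^ t ≤ #P := by
    rw [Fintype.card_piFinset]
    simpa using pow_card_le_prod univ (fun i : Fin t => #{v : Fin n | v.val % t = i.val}) (n / t)
      fun i _ => div_le_card_filter_mod_eq i.isLt
  refine h_card.trans (card_le_card_of_injOn (fun g => univ.image g) (fun g hg => ?_) ?_)
  · refine SimpleGraph.mem_cliqueFinset_iff.2 ⟨?_, ?_⟩
    · rw [coe_image]
      rintro _ ⟨i, -, rfl⟩ _ ⟨j, -, rfl⟩ hij
      rw [SimpleGraph.turanGraph_adj, hP hg, hP hg]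
      exact fun h => hij (congrArg g (Fin.ext h))
    · rw [card_image_of_injective _ (h_inj hg), card_univ, Fintype.card_fin]
  · intro g hg g' hg' h_eq
    funext i
    have h_mem : g i ∈ univ.image g' := h_eq.subset (mem_image_of_mem g (mem_univ i))
    obtain ⟨j, -, hj⟩ := mem_image.1 h_mem
    have hji : j = i := Fin.ext (by rw [← hP hg' j, ← hP hg i, hj])
    rw [← hj, hji]

end TuranGraph

section Rounding

variable {V : Type} [Fintype V] [DecidableEq V] {t : ℕ} {μ : Finset V → ℝ}

theorem setDegree_map_powersetCard {𝒯 : Finset (Finset V)} (h𝒯 : ∀ T ∈ 𝒯, #T = t) :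
    setDegree (FunOnFinite.map (powersetCard t) μ) 𝒯 = setDegree μ (𝒯.biUnion id) := by
  rw [setDegree_map, setDegree]
  refine sum_congr (filter_congr fun K _ => ?_) fun _ _ => rfl
  rw [biUnion_subset]
  exact ⟨fun h T hT => (mem_powersetCard.1 (h hT)).1,
    fun h T hT => mem_powersetCard.2 ⟨h T hT, h𝒯 T hT⟩⟩

theorem codegree_map_powersetCard_le (hμ : ∀ K, 0 ≤ μ K) {κ : ℝ} (hκ0 : 0 ≤ κ)
    (hκ : ∀ S, #S = t + 1 → setDegree μ S ≤ κ) (T T' : Finset V) :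
    codegree (FunOnFinite.map (powersetCard t) μ) T T' ≤ κ := by
  rw [codegree]
  split_ifs with hTT'
  · exact hκ0
  by_cases h_card : ∀ R ∈ ({T, T'} : Finset (Finset V)), #R = t
  · have hT : #T = t := h_card T (by simp)
    have hT' : #T' = t := h_card T' (by simp)
    have h_lt : t < #(T ∪ T') := by
      have h_ss : T ⊂ T ∪ T' := subset_union_left.ssubset_of_ne fun h =>
        hTT' (eq_of_subset_of_card_le (union_eq_left.1 h.symm) (by omega)).symm
      exact hT ▸ card_lt_card h_ss
    obtain ⟨S, hS, hS_card⟩ := exists_subset_card_eq (Nat.succ_le_of_lt h_lt)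
    rw [setDegree_map_powersetCard h_card]
    refine (setDegree_anti hμ (hS.trans ?_)).trans (hκ S hS_card)
    simp
  · rw [setDegree_eq_zero (U := powersetCard t univ)]
    · exact hκ0
    · rintro _ hL
      obtain ⟨K, -, rfl⟩ := exists_eq_of_map_ne_zero hL
      exact powersetCard_mono (subset_univ K)
    · exact fun h => h_card fun R hR => (mem_powersetCard.1 (h hR)).2

-- The nibble applies to the hypergraph on the `t`-cliques of `G` in which each clique `K` becomes
-- the hyperedge `powersetCard t K`: two `t`-cliques together span at least `t + 1` vertices.
theorem exists_thetaInt_le_mul_totalWeight (ht : 0 < t) (k : ℕ) {ε : ℝ} (hε : 0 < ε) :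
    ∃ κ > 0, ∀ {V : Type} [Fintype V] [DecidableEq V] {G : SimpleGraph V} {μ : Finset V → ℝ},
      (∀ K, 0 ≤ μ K) → (∀ K, μ K ≠ 0 → G.IsClique (K : Set V) ∧ #K ≤ k) →
      (∀ T, #T = t → G.IsClique (T : Set V) → 1 ≤ setDegree μ T) →
      (∀ S, #S = t + 1 → setDegree μ S ≤ κ) → 1 ≤ κ * totalWeight μ →
      thetaInt t G (fun _ => 1) ≤ (1 + ε) * totalWeight μ := by
  obtain ⟨κ, hκ0, hκ⟩ := exists_cover_of_one_le_setDegree (2 ^ k) hε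
  refine ⟨κ, hκ0, fun {V} _ _ {G μ} hμ h_supp h_deg h_codeg h_weight => ?_⟩
  set w := FunOnFinite.map (powersetCard t) μ
  have hw_weight : totalWeight w = totalWeight μ := totalWeight_map _
  have hw_card : ∀ L, w L ≠ 0 → #L ≤ 2 ^ k := fun L hL => by
    obtain ⟨K, hK, rfl⟩ := exists_eq_of_map_ne_zero hL
    rw [card_powersetCard]
    exact (Nat.choose_le_two_pow _ _).trans (Nat.pow_le_pow_right two_pos (h_supp K hK).2)
  have hw_clique : ∀ L, w L ≠ 0 → L ⊆ G.cliqueFinset t := fun L hL T hT => by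
    obtain ⟨K, hK, rfl⟩ := exists_eq_of_map_ne_zero hL
    obtain ⟨hTK, hT_card⟩ := mem_powersetCard.1 hT
    exact SimpleGraph.mem_cliqueFinset_iff.2 ⟨(h_supp K hK).1.subset (coe_subset.2 hTK), hT_card⟩
  have hw_deg : ∀ T ∈ G.cliqueFinset t, 1 ≤ setDegree w {T} := fun T hT => by
    obtain ⟨hT_clique, hT_card⟩ := SimpleGraph.mem_cliqueFinset_iff.1 hT
    rw [setDegree_map_powersetCard (by simpa using hT_card), singleton_biUnion]
    exact h_deg T hT_card hT_clique
  obtain ⟨C, hC, hC_card⟩ := hκ (map_nonneg_of_nonneg hμ _) hw_card hw_clique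
    (codegree_map_powersetCard_le hμ hκ0.le h_codeg) hw_deg (hw_weight ▸ h_weight)
  rw [hw_weight] at hC_card
  refine (thetaInt_le_card_add_card_sdiff ht fun L hL => ?_).trans hC_card
  obtain ⟨L', hL', hLL'⟩ := hC L hL
  obtain ⟨K, hK, rfl⟩ := exists_eq_of_map_ne_zero hL'
  exact ⟨K, (h_supp K hK).1, fun T hT => (mem_powersetCard.1 (hLL' hT)).1⟩

end Rounding

section Asymptotics

open Filter

variable {t : ℕ}

theorem exists_thetaInt_le_inv_greedyBound (ht : 0 < t) (k : ℕ) {ε : ℝ} (hε : 0 < ε) :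
    ∃ κ > 0, ∀ {V : Type} [Fintype V] [DecidableEq V] (G : SimpleGraph V) {D : ℝ}, 0 < D →
      0 < greedyBound k t (Fintype.card V + D) → greedyBound k t (Fintype.card V + D) ≤ κ →
      (k / D) ^ (t + 1) ≤ κ * greedyBound k t (Fintype.card V + D) →
      thetaInt t G (fun _ => 1) ≤ (1 + ε) * (greedyBound k t (Fintype.card V + D))⁻¹ := by
  obtain ⟨κ, hκ0, hκ⟩ := exists_thetaInt_le_mul_totalWeight ht k hε
  refine ⟨κ, hκ0, fun {V} _ _ G {D} hD hb h_weight h_codeg => ?_⟩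
  set b := greedyBound k t (Fintype.card V + D)
  set μ := b⁻¹ • greedyLaw G D k univ
  have hμ_weight : totalWeight μ = b⁻¹ := by
    rw [← setDegree_empty, setDegree_smul, setDegree_empty, totalWeight_greedyLaw G hD, mul_one]
  rw [← hμ_weight]
  refine hκ (fun K => mul_nonneg (inv_nonneg.2 hb.le) (greedyLaw_nonneg G hD.le k univ K))
    (fun K hK => (isClique_of_greedyLaw_ne_zero G (right_ne_zero_of_mul hK)).2)
    (fun T hT hT_clique => ?_) (fun S hS => ?_) ?_
  · rw [setDegree_smul, ← div_eq_inv_mul, one_le_div hb]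
    simpa only [card_univ, hT] using greedyBound_le_setDegree G hD k (subset_univ T) hT_clique
  · rw [setDegree_smul, ← div_eq_inv_mul, div_le_iff₀ hb]
    exact (hS ▸ setDegree_greedyLaw_le G hD k univ S).trans h_codeg
  · rwa [hμ_weight, ← div_eq_mul_inv, one_le_div hb]

theorem tendsto_greedyBound_atTop (k : ℕ) (ht : t ≠ 0) :
    Tendsto (greedyBound k t) atTop (nhds 0) := by
  have h_pow := ((tendsto_const_nhds (x := (t : ℝ))).div_atTop tendsto_id).pow t
  rw [zero_pow ht] at h_pow
  exact mul_zero (greedyRatio k t) ▸ h_pow.const_mul (greedyRatio k t)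

theorem eventually_div_pow_le_mul_greedyBound {k : ℕ} {δ κ : ℝ} (ht : 0 < t) (hδ : 0 < δ)
    (hκ : 0 < κ) (hk : 0 < greedyRatio k t) :
    ∀ᶠ x : ℝ in atTop, (k / (δ * x)) ^ (t + 1) ≤ κ * greedyBound k t ((1 + δ) * x) := by
  have hc : 0 < κ * greedyRatio k t * (t / (1 + δ)) ^ t := by positivity
  have h_lim : Tendsto (fun x : ℝ => (k / δ) ^ (t + 1) / x) atTop (nhds 0) :=
    tendsto_const_nhds.div_atTop tendsto_id
  filter_upwards [h_lim.eventually_le_const hc, eventually_gt_atTop 0] with x hx hx0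
  calc (k / (δ * x)) ^ (t + 1) = (k / δ) ^ (t + 1) / x * x⁻¹ ^ t := by
        rw [← div_div, div_pow _ x, pow_succ x, inv_pow]; field_simp
    _ ≤ κ * greedyRatio k t * (t / (1 + δ)) ^ t * x⁻¹ ^ t := by gcongr
    _ = κ * greedyBound k t ((1 + δ) * x) := by
        rw [greedyBound, ← div_div, div_eq_mul_inv _ x, mul_pow]; ring

theorem inv_greedyBound_le {k : ℕ} {δ x : ℝ} (hδ : 0 < 1 + δ) (hk : (1 + δ)⁻¹ ≤ greedyRatio k t)
    (hx : 0 ≤ x) :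
    (greedyBound k t ((1 + δ) * x))⁻¹ ≤ (1 + δ) ^ (t + 1) * (x / t) ^ t := by
  calc (greedyBound k t ((1 + δ) * x))⁻¹ = (greedyRatio k t)⁻¹ * ((1 + δ) * (x / t)) ^ t := by
        rw [greedyBound, mul_inv, ← inv_pow, inv_div, mul_div_assoc]
    _ ≤ (1 + δ) * ((1 + δ) * (x / t)) ^ t := by
        gcongr
        exact inv_le_of_inv_le₀ hδ hk
    _ = (1 + δ) ^ (t + 1) * (x / t) ^ t := by rw [mul_pow]; ring

theorem eventually_thetaInt_le (ht : 0 < t) {δ : ℝ} (hδ : 0 < δ) :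
    ∀ᶠ n : ℕ in atTop, ∀ G : SimpleGraph (Fin n),
      thetaInt t G (fun _ => 1) ≤ (1 + δ) ^ (t + 2) * ((n : ℝ) / t) ^ t := by
  obtain ⟨k, hk⟩ := ((tendsto_greedyRatio t).eventually_const_lt
    (inv_lt_one_of_one_lt₀ (by linarith : 1 < 1 + δ))).exists
  have hk0 : 0 < greedyRatio k t := (inv_pos.2 (by linarith)).trans hk
  obtain ⟨κ, hκ0, hκ⟩ := exists_thetaInt_le_inv_greedyBound ht k hδ
  have h_weight : ∀ᶠ x : ℝ in atTop, greedyBound k t ((1 + δ) * x) ≤ κ :=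
    ((tendsto_greedyBound_atTop k ht.ne').comp
      (tendsto_id.const_mul_atTop (by linarith : 0 < 1 + δ))).eventually_le_const hκ0
  filter_upwards [tendsto_natCast_atTop_atTop.eventually h_weight,
    tendsto_natCast_atTop_atTop.eventually (eventually_div_pow_le_mul_greedyBound ht hδ hκ0 hk0),
    eventually_gt_atTop 0] with n hn_weight hn_codeg hn G
  have h_card : (Fintype.card (Fin n) : ℝ) + δ * n = (1 + δ) * n := by
    rw [Fintype.card_fin]; ring
  have hD : 0 < δ * n := by positivity
  have hb : 0 < greedyBound k t ((1 + δ) * n) := by rw [greedyBound]; positivity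
  have h_theta := hκ G hD
  simp only [h_card] at h_theta
  calc thetaInt t G (fun _ => 1) ≤ (1 + δ) * (greedyBound k t ((1 + δ) * n))⁻¹ :=
        h_theta hb hn_weight hn_codeg
    _ ≤ (1 + δ) * ((1 + δ) ^ (t + 1) * ((n : ℝ) / t) ^ t) := by
        gcongr
        exact inv_greedyBound_le (by positivity) hk.le n.cast_nonneg
    _ = (1 + δ) ^ (t + 2) * ((n : ℝ) / t) ^ t := by ring

theorem eventually_div_le_mul_natDiv (ht : 0 < t) {δ : ℝ} (hδ : 0 < δ) :
    ∀ᶠ n : ℕ in atTop, (n : ℝ) / t ≤ (1 + δ) * (n / t : ℕ) := by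
  have h_lim : Tendsto (fun n : ℕ => δ * (n / t : ℕ)) atTop atTop :=
    (tendsto_natCast_atTop_atTop.comp (Nat.tendsto_div_const_atTop ht.ne')).const_mul_atTop hδ
  filter_upwards [h_lim.eventually_ge_atTop 1] with n hn
  have h_floor := Nat.lt_floor_add_one ((n : ℝ) / t)
  rw [Nat.floor_div_eq_div] at h_floor
  linarith

theorem eventually_le_thetaInt_turanGraph (ht : 0 < t) {δ : ℝ} (hδ : 0 < δ) :
    ∀ᶠ n : ℕ in atTop, ((n : ℝ) / t) ^ t ≤
      (1 + δ) ^ t * thetaInt t (SimpleGraph.turanGraph n t) (fun _ => 1) := by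
  filter_upwards [eventually_div_le_mul_natDiv ht hδ] with n hn
  calc ((n : ℝ) / t) ^ t ≤ ((1 + δ) * (n / t : ℕ)) ^ t := by gcongr
    _ = (1 + δ) ^ t * ((n / t) ^ t : ℕ) := by rw [mul_pow, Nat.cast_pow]
    _ ≤ (1 + δ) ^ t * #((SimpleGraph.turanGraph n t).cliqueFinset t) := by
        gcongr
        exact div_pow_le_card_cliqueFinset_turanGraph n t
    _ ≤ (1 + δ) ^ t * thetaInt t (SimpleGraph.turanGraph n t) (fun _ => 1) := by
        gcongr
        exact card_cliqueFinset_le_thetaInt ht (SimpleGraph.turanGraph_cliqueFree ht)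

theorem exists_one_add_pow_le (m : ℕ) {ε : ℝ} (hε : 0 < ε) : ∃ δ > 0, (1 + δ) ^ m ≤ 1 + ε := by
  have h_cont : Continuous fun δ : ℝ => (1 + δ) ^ m := by fun_prop
  have h_lim : Tendsto (fun δ : ℝ => (1 + δ) ^ m) (nhdsWithin 0 (Set.Ioi 0)) (nhds 1) := by
    simpa using (h_cont.tendsto 0).mono_left nhdsWithin_le_nhds
  obtain ⟨δ, hδ, hδ0⟩ :=
    ((h_lim.eventually_le_const (lt_add_of_pos_right 1 hε)).and self_mem_nhdsWithin).exists
  exact ⟨δ, hδ0, hδ⟩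

end Asymptotics

/-- Theorem 1.6: for fixed `t ≥ 2`, `θ_t(G) ≤ (1 + ε) θ_t(T_{n,t})` for every
`n`-vertex graph `G`, once `n` is large enough. -/
theorem stmt1 (t : ℕ) (ht : 2 ≤ t) :
    ∀ ε : ℝ, 0 < ε → ∃ N : ℕ, ∀ n : ℕ, N ≤ n → ∀ G : SimpleGraph (Fin n),
      thetaInt t G (fun _ => 1) ≤
        (1 + ε) * thetaInt t (SimpleGraph.turanGraph n t) (fun _ => 1) := by
  intro ε hε
  have ht0 : 0 < t := by omega
  obtain ⟨δ, hδ, hδε⟩ := exists_one_add_pow_le (t + 2 + t) hε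
  obtain ⟨N, hN⟩ := Filter.eventually_atTop.1
    ((eventually_thetaInt_le ht0 hδ).and (eventually_le_thetaInt_turanGraph ht0 hδ))
  refine ⟨N, fun n hn G => ?_⟩
  obtain ⟨h_upper, h_lower⟩ := hN n hn
  set θ := thetaInt t (SimpleGraph.turanGraph n t) (fun _ => 1)
  have hθ : 0 ≤ θ := (Nat.cast_nonneg _).trans
    (card_cliqueFinset_le_thetaInt ht0 (SimpleGraph.turanGraph_cliqueFree ht0))
  calc thetaInt t G (fun _ => 1) ≤ (1 + δ) ^ (t + 2) * ((n : ℝ) / t) ^ t := h_upper G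
    _ ≤ (1 + δ) ^ (t + 2) * ((1 + δ) ^ t * θ) := by gcongr
    _ = (1 + δ) ^ (t + 2 + t) * θ := by rw [pow_add _ (t + 2), mul_assoc]
    _ ≤ (1 + ε) * θ := by gcongr
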